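/- Mean-square convergence of AdaGrad-Norm: for any deterministic initial point θ₁ ∈ ℝ^d and any S₀ > 0, lim_{n→∞} E[‖∇g(θ_n)‖²] = 0. -/

import Mathlib

open MeasureTheory Filter Topology

section SmoothFunction

variable {E : Type*} [NormedAddCommGroup E] [InnerProductSpace ℝ E] [CompleteSpace E]
  {g : E → ℝ} {L : ℝ}

theorem abs_sub_sub_inner_gradient_le (hL : 0 ≤ L) (hg : Differentiable ℝ g)
    (hsmooth : ∀ x y, ‖gradient g x - gradient g y‖ ≤ L * ‖x - y‖) (x y : E) :
    |g y - g x - inner ℝ (gradient g x) (y - x)| ≤ L * ‖y - x‖ ^ 2 := by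
  have h := (convex_segment x y).norm_image_sub_le_of_norm_hasFDerivWithin_le' (𝕜 := ℝ) (f := g)
    (f' := fun z => InnerProductSpace.toDual ℝ E (gradient g z))
    (φ := InnerProductSpace.toDual ℝ E (gradient g x)) (C := L * ‖y - x‖)
    (fun z _ => ((hg z).hasGradientAt.hasFDerivAt).hasFDerivWithinAt)
    (fun z hz => by
      rw [← map_sub, LinearIsometryEquiv.norm_map]
      refine (hsmooth z x).trans (mul_le_mul_of_nonneg_left ?_ hL)
      obtain ⟨t, ⟨ht0, ht1⟩, rfl⟩ := segment_eq_image' ℝ x y ▸ hz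
      simp only [add_sub_cancel_left, norm_smul, Real.norm_eq_abs, abs_of_nonneg ht0]
      exact mul_le_of_le_one_left (norm_nonneg _) ht1)
    (left_mem_segment ℝ x y) (right_mem_segment ℝ x y)
  simpa [Real.norm_eq_abs, InnerProductSpace.toDual_apply_apply, pow_two, mul_assoc] using h

theorem norm_gradient_sq_le (hL : 0 < L) (hg : Differentiable ℝ g) (hnonneg : ∀ x, 0 ≤ g x)
    (hsmooth : ∀ x y, ‖gradient g x - gradient g y‖ ≤ L * ‖x - y‖) (x : E) :
    ‖gradient g x‖ ^ 2 ≤ 4 * L * g x := by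
  have h := (abs_le.1 (abs_sub_sub_inner_gradient_le hL.le hg hsmooth x
    (x - (2 * L)⁻¹ • gradient g x))).2
  have h0 := hnonneg (x - (2 * L)⁻¹ • gradient g x)
  rw [sub_sub_cancel_left, inner_neg_right, inner_smul_right, real_inner_self_eq_norm_sq, norm_neg,
    norm_smul, Real.norm_of_nonneg (by positivity), mul_pow] at h
  have e : L * ((2 * L)⁻¹ ^ 2 * ‖gradient g x‖ ^ 2) = (4 * L)⁻¹ * ‖gradient g x‖ ^ 2 := by
    field_simp; norm_num; ring
  have e2 : (2 * L)⁻¹ * ‖gradient g x‖ ^ 2 = 2 * ((4 * L)⁻¹ * ‖gradient g x‖ ^ 2) := by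
    field_simp; norm_num; ring
  rw [e, e2] at h
  have : (4 * L)⁻¹ * ‖gradient g x‖ ^ 2 ≤ g x := by linarith
  rwa [inv_mul_le_iff₀ (by positivity)] at this

/-- The squared excess of `g` over a level `Δ` satisfies a quadratic upper bound for steps of
bounded length. -/
theorem sq_posPart_sub_le (hL : 0 < L) (hg : Differentiable ℝ g) (hnonneg : ∀ x, 0 ≤ g x)
    (hsmooth : ∀ x y, ‖gradient g x - gradient g y‖ ≤ L * ‖x - y‖) {Δ α : ℝ} (hΔ : 0 ≤ Δ) :
    ∃ K, 0 ≤ K ∧ ∀ x δ : E, ‖δ‖ ≤ α →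
      (max (g (x + δ) - Δ) 0) ^ 2 ≤ (max (g x - Δ) 0) ^ 2
        + 2 * max (g x - Δ) 0 * inner ℝ (gradient g x) δ
        + K * (max (g x - Δ) 0 + 1) * ‖δ‖ ^ 2 := by
  refine ⟨10 * L + 8 * L * Δ + 2 * L ^ 2 * α ^ 2, by positivity, fun x δ hδ => ?_⟩
  have hd := (abs_le.1 (abs_sub_sub_inner_gradient_le hL.le hg hsmooth x (x + δ))).2
  rw [add_sub_cancel_left] at hd
  have hv := norm_gradient_sq_le hL hg hnonneg hsmooth x
  set i := inner ℝ (gradient g x) δ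
  have hi : i ^ 2 ≤ ‖gradient g x‖ ^ 2 * ‖δ‖ ^ 2 := by
    rw [← mul_pow]; exact sq_le_sq' (neg_le_of_abs_le (abs_real_inner_le_norm _ _))
      (real_inner_le_norm _ _)
  set w := max (g x - Δ) 0
  have hw : 0 ≤ w := le_max_right _ _
  have hgw : g x ≤ w + Δ := by linarith [le_max_left (g x - Δ) 0]
  have hδ2 : ‖δ‖ ^ 2 ≤ α ^ 2 := by gcongr
  have key : max (g (x + δ) - Δ) 0 ≤ |w + (i + L * ‖δ‖ ^ 2)| := by
    refine max_le (le_trans ?_ (le_abs_self _)) (abs_nonneg _)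
    linarith [le_max_left (g x - Δ) 0]
  have h1 : (max (g (x + δ) - Δ) 0) ^ 2 ≤ (w + (i + L * ‖δ‖ ^ 2)) ^ 2 := by
    rw [← sq_abs (w + _)]; exact pow_le_pow_left₀ (le_max_right _ _) key 2
  have h2 : i ^ 2 ≤ 4 * L * (w + Δ) * ‖δ‖ ^ 2 :=
    hi.trans (mul_le_mul_of_nonneg_right (hv.trans (by gcongr)) (by positivity))
  have h3 : (L * ‖δ‖ ^ 2) ^ 2 ≤ L ^ 2 * α ^ 2 * ‖δ‖ ^ 2 := by
    have : L ^ 2 * ‖δ‖ ^ 2 * ‖δ‖ ^ 2 ≤ L ^ 2 * ‖δ‖ ^ 2 * α ^ 2 := by gcongr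
    nlinarith
  have h4 : (i + L * ‖δ‖ ^ 2) ^ 2 ≤ 2 * i ^ 2 + 2 * (L * ‖δ‖ ^ 2) ^ 2 := by
    nlinarith [sq_nonneg (i - L * ‖δ‖ ^ 2)]
  have p0 : 0 ≤ ‖δ‖ ^ 2 := by positivity
  have p1 : 0 ≤ L * Δ * w * ‖δ‖ ^ 2 := by positivity
  have p2 : 0 ≤ L ^ 2 * α ^ 2 * w * ‖δ‖ ^ 2 := by positivity
  have p3 : 0 ≤ L * ‖δ‖ ^ 2 := by positivity
  nlinarith

end SmoothFunction

/-- Elementary inequalities between consecutive AdaGrad-Norm step sizes `a = 1/√s` and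
`b = 1/√(s + γ²)`. -/
theorem inv_sqrt_step {s γ : ℝ} (hs : 0 < s) (hγ : 0 ≤ γ) :
    0 < (√(s + γ ^ 2))⁻¹ ∧ (√(s + γ ^ 2))⁻¹ ≤ (√s)⁻¹ ∧ (√(s + γ ^ 2))⁻¹ * γ ≤ 1 ∧
    (√(s + γ ^ 2))⁻¹ ^ 2 * γ ^ 2 * (√s)⁻¹ ≤ 2 * ((√s)⁻¹ - (√(s + γ ^ 2))⁻¹) ∧
    ((√s)⁻¹ - (√(s + γ ^ 2))⁻¹) * γ ≤ (√s)⁻¹ ^ 2 * γ ^ 2 := by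
  have hs' : 0 < s + γ ^ 2 := by positivity
  have ha : 0 < (√s)⁻¹ := by positivity
  have hb : 0 < (√(s + γ ^ 2))⁻¹ := by positivity
  have hab : (√(s + γ ^ 2))⁻¹ ≤ (√s)⁻¹ := by
    gcongr
    nlinarith
  have key : (√s)⁻¹ ^ 2 * (√(s + γ ^ 2))⁻¹ ^ 2 * γ ^ 2 = (√s)⁻¹ ^ 2 - (√(s + γ ^ 2))⁻¹ ^ 2 := by
    rw [inv_pow, inv_pow, Real.sq_sqrt hs.le, Real.sq_sqrt hs'.le]
    field_simp
    ring
  generalize (√s)⁻¹ = a at *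
  generalize (√(s + γ ^ 2))⁻¹ = b at *
  have hbγ : b * γ ≤ 1 := by
    have : (b * γ) ^ 2 ≤ 1 := by
      have h : a ^ 2 * (b * γ) ^ 2 ≤ a ^ 2 * 1 := by nlinarith
      exact le_of_mul_le_mul_left h (by positivity)
    nlinarith [mul_nonneg hb.le hγ]
  have h4 : b ^ 2 * γ ^ 2 * a ≤ 2 * (a - b) := by
    have h : a * (b ^ 2 * γ ^ 2 * a) ≤ a * (2 * (a - b)) := by nlinarith
    exact le_of_mul_le_mul_left h ha
  refine ⟨hb, hab, hbγ, h4, ?_⟩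
  have h5 : a - b ≤ a ^ 2 * γ := by
    have h : (a + b) * (a - b) ≤ (a + b) * (a ^ 2 * γ) := by
      have : a ^ 2 * b * γ * (b * γ) ≤ a ^ 2 * b * γ * 1 := by gcongr
      have p : 0 ≤ a ^ 3 * γ := by positivity
      nlinarith
    exact le_of_mul_le_mul_left h (by positivity)
  nlinarith

section Path

/-- A sequence which is frequently below `lo` and cannot cross from `lo` to `hi`, neither by a
single step nor by an excursion inside `(lo, hi)`, is eventually below `hi`. -/
theorem eventually_lt_of_frequently_le {y : ℕ → ℝ} {lo mid hi : ℝ} (hlo : lo < hi)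
    (hfreq : ∃ᶠ n in atTop, y n ≤ lo) (hstep : ∀ᶠ n in atTop, y n ≤ lo → y (n + 1) ≤ mid)
    (hexc : ∀ᶠ M in atTop, ∀ m ≥ M, ∀ n ≥ m, y m ≤ mid →
      (∀ k ∈ Finset.Ico m n, lo < y k ∧ y k < hi) → y n < hi) :
    ∀ᶠ n in atTop, y n < hi := by
  obtain ⟨M₁, hM₁⟩ := eventually_atTop.1 hstep
  obtain ⟨M₂, hM₂⟩ := eventually_atTop.1 hexc
  obtain ⟨N, hN, hyN⟩ := frequently_atTop.1 hfreq (max M₁ M₂)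
  have hN₁ := (le_max_left _ _).trans hN
  have hN₂ := (le_max_right _ _).trans hN
  have inv : ∀ n ≥ N, y n ≤ lo ∨ ∃ m ≥ N, m ≤ n ∧ y m ≤ mid ∧
      ∀ k ∈ Finset.Ico m (n + 1), lo < y k ∧ y k < hi := by
    intro n hn
    induction n, hn using Nat.le_induction with
    | base => exact Or.inl hyN
    | succ n hn ih =>
      by_cases hlow : y (n + 1) ≤ lo
      · exact Or.inl hlow
      refine Or.inr ?_
      obtain ⟨m, hm, hmn, hym, hk⟩ : ∃ m ≥ N, m ≤ n + 1 ∧ y m ≤ mid ∧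
          ∀ k ∈ Finset.Ico m (n + 1), lo < y k ∧ y k < hi := by
        rcases ih with h | ⟨m, hm, hmn, hym, hk⟩
        · exact ⟨n + 1, by omega, le_rfl, hM₁ n (hN₁.trans hn) h, by simp⟩
        · exact ⟨m, hm, by omega, hym, hk⟩
      refine ⟨m, hm, hmn, hym, fun k hk' => ?_⟩
      rcases (Nat.lt_succ_iff_lt_or_eq.1 (Finset.mem_Ico.1 hk').2) with h | rfl
      · exact hk k (Finset.mem_Ico.2 ⟨(Finset.mem_Ico.1 hk').1, h⟩)
      · exact ⟨not_le.1 hlow, hM₂ N hN₂ m hm _ hmn hym hk⟩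
  filter_upwards [eventually_ge_atTop N] with n hn
  rcases inv n hn with h | ⟨m, -, hmn, -, hk⟩
  · exact h.trans_lt hlo
  · exact (hk n (Finset.mem_Ico.2 ⟨hmn, by omega⟩)).2

theorem eventually_norm_sum_Ico_lt {F : Type*} [SeminormedAddCommGroup F] {f : ℕ → F}
    (hf : ∃ l, Tendsto (fun n => ∑ k ∈ Finset.range n, f k) atTop (𝓝 l)) {ε : ℝ} (hε : 0 < ε) :
    ∀ᶠ M in atTop, ∀ m ≥ M, ∀ n ≥ m, ‖∑ k ∈ Finset.Ico m n, f k‖ < ε := by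
  obtain ⟨l, hl⟩ := hf
  obtain ⟨M, hM⟩ := Metric.cauchySeq_iff.1 hl.cauchySeq ε hε
  filter_upwards [eventually_ge_atTop M] with M' hM' m hm n hn
  rw [Finset.sum_Ico_eq_sub _ hn, ← dist_eq_norm]
  exact hM n (by omega) m (by omega)

variable {E : Type*} [NormedAddCommGroup E]

/-- A continuous cutoff which equals `1` on vectors of norm at least `η`. -/
noncomputable def normCutoff (η : ℝ) (v : E) : ℝ := min 1 (‖v‖ ^ 2 / η ^ 2)

theorem normCutoff_nonneg (η : ℝ) (v : E) : 0 ≤ normCutoff η v := by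
  unfold normCutoff; positivity

theorem normCutoff_le_one (η : ℝ) (v : E) : normCutoff η v ≤ 1 := min_le_left _ _

theorem normCutoff_eq_one {η : ℝ} (hη : 0 < η) {v : E} (h : η ≤ ‖v‖) : normCutoff η v = 1 := by
  refine min_eq_left ?_
  rw [le_div_iff₀ (by positivity), one_mul]
  gcongr

theorem normCutoff_le_sq (η : ℝ) (v : E) : normCutoff η v ≤ ‖v‖ ^ 2 / η ^ 2 := min_le_right _ _

theorem normCutoff_le {η : ℝ} (hη : 0 < η) (v : E) : normCutoff η v ≤ ‖v‖ / η := by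
  rcases le_total (‖v‖ / η) 1 with h | h
  · refine (normCutoff_le_sq η v).trans ?_
    rw [← div_pow]
    exact pow_le_of_le_one (by positivity) h two_ne_zero
  · exact (normCutoff_le_one η v).trans h

/-- A continuous cutoff which equals `1` on `(-∞, N]` and `0` on `[N + 1, ∞)`. -/
noncomputable def levelCutoff (N y : ℝ) : ℝ := max 0 (min 1 (N + 1 - y))

theorem levelCutoff_nonneg (N y : ℝ) : 0 ≤ levelCutoff N y := le_max_left _ _

theorem levelCutoff_le_one (N y : ℝ) : levelCutoff N y ≤ 1 := max_le zero_le_one (min_le_left _ _)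

theorem levelCutoff_eq_one {N y : ℝ} (h : y ≤ N) : levelCutoff N y = 1 := by
  rw [levelCutoff, min_eq_left (by linarith), max_eq_right zero_le_one]

theorem levelCutoff_eq_zero {N y : ℝ} (h : N + 1 ≤ y) : levelCutoff N y = 0 :=
  max_eq_left ((min_le_right _ _).trans (by linarith))

variable [InnerProductSpace ℝ E]

/-- The AdaGrad-Norm recursion driven by the stochastic gradients `G`. -/
structure AdaGradNormPath (α₀ : ℝ) (G θ : ℕ → E) (S : ℕ → ℝ) : Prop where
  α₀_pos : 0 < α₀
  S_zero_pos : 0 < S 0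
  S_succ : ∀ n, S (n + 1) = S n + ‖G n‖ ^ 2
  θ_succ : ∀ n, θ (n + 1) = θ n - (α₀ / √(S (n + 1))) • G n

namespace AdaGradNormPath

variable {α₀ : ℝ} {G θ : ℕ → E} {S : ℕ → ℝ} (h : AdaGradNormPath α₀ G θ S)
include h

theorem S_mono : Monotone S :=
  monotone_nat_of_le_succ fun n => by rw [h.S_succ]; nlinarith [sq_nonneg ‖G n‖]

theorem S_pos (n : ℕ) : 0 < S n := h.S_zero_pos.trans_le (h.S_mono n.zero_le)

theorem rate_pos (n : ℕ) : 0 < (√(S n))⁻¹ := inv_pos.2 (Real.sqrt_pos.2 (h.S_pos n))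

theorem rate_succ_le (n : ℕ) : (√(S (n + 1)))⁻¹ ≤ (√(S n))⁻¹ :=
  h.S_succ n ▸ (inv_sqrt_step (h.S_pos n) (norm_nonneg (G n))).2.1

theorem rate_le (n : ℕ) : (√(S n))⁻¹ ≤ (√(S 0))⁻¹ :=
  antitone_nat_of_succ_le (f := fun n => (√(S n))⁻¹) h.rate_succ_le n.zero_le

theorem rate_mul_norm_le (n : ℕ) : (√(S (n + 1)))⁻¹ * ‖G n‖ ≤ 1 :=
  h.S_succ n ▸ (inv_sqrt_step (h.S_pos n) (norm_nonneg (G n))).2.2.1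

theorem rate_sq_mul_le (n : ℕ) : (√(S (n + 1)))⁻¹ ^ 2 * ‖G n‖ ^ 2 * (√(S n))⁻¹ ≤
    2 * ((√(S n))⁻¹ - (√(S (n + 1)))⁻¹) :=
  h.S_succ n ▸ (inv_sqrt_step (h.S_pos n) (norm_nonneg (G n))).2.2.2.1

theorem rate_sub_mul_le (n : ℕ) : ((√(S n))⁻¹ - (√(S (n + 1)))⁻¹) * ‖G n‖ ≤
    (√(S n))⁻¹ ^ 2 * ‖G n‖ ^ 2 :=
  h.S_succ n ▸ (inv_sqrt_step (h.S_pos n) (norm_nonneg (G n))).2.2.2.2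

theorem rate_succ_sq_le (n : ℕ) : (√(S (n + 1)))⁻¹ ^ 2 * ‖G n‖ ^ 2 ≤
    (√(S n))⁻¹ ^ 2 * ‖G n‖ ^ 2 := by
  gcongr ?_ ^ 2 * _
  exact h.rate_succ_le n

theorem succ_eq (n : ℕ) : θ (n + 1) = θ n + -((α₀ * (√(S (n + 1)))⁻¹) • G n) := by
  rw [h.θ_succ, div_eq_mul_inv, sub_eq_add_neg]

theorem norm_step (n : ℕ) :
    ‖-((α₀ * (√(S (n + 1)))⁻¹) • G n)‖ = α₀ * ((√(S (n + 1)))⁻¹ * ‖G n‖) := by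
  rw [norm_neg, norm_smul, Real.norm_of_nonneg (mul_nonneg h.α₀_pos.le (h.rate_pos _).le),
    mul_assoc]

theorem norm_step_le (n : ℕ) : ‖-((α₀ * (√(S (n + 1)))⁻¹) • G n)‖ ≤ α₀ := by
  rw [h.norm_step]
  exact mul_le_of_le_one_right h.α₀_pos.le (h.rate_mul_norm_le n)

theorem norm_sub_initial_le (n : ℕ) : ‖θ n - θ 0‖ ≤ n * α₀ := by
  induction n with
  | zero => simp
  | succ n ih =>
    rw [h.succ_eq, add_sub_right_comm]
    refine (norm_add_le _ _).trans ?_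
    have := h.norm_step_le n
    push_cast
    linarith

/-- If the scaled squared stochastic gradients are summable, the accumulator is bounded. -/
theorem bddAbove_of_summable
    (hsum : Summable fun n => (√(S n))⁻¹ ^ 2 * ‖G n‖ ^ 2) : BddAbove (Set.range S) := by
  have hS : ∀ n, S n ≤ S 0 * Real.exp (∑ k ∈ Finset.range n, (√(S k))⁻¹ ^ 2 * ‖G k‖ ^ 2) := by
    intro n
    induction n with
    | zero => simp
    | succ n ih =>
      rw [Finset.sum_range_succ, Real.exp_add, h.S_succ, ← mul_assoc]
      have e : S n + ‖G n‖ ^ 2 = S n * ((√(S n))⁻¹ ^ 2 * ‖G n‖ ^ 2 + 1) := by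
        have := (h.S_pos n)
        rw [inv_pow, Real.sq_sqrt this.le]
        field_simp
        ring
      rw [e]
      exact mul_le_mul ih (Real.add_one_le_exp _) (by positivity)
        (mul_nonneg h.S_zero_pos.le (Real.exp_nonneg _))
  refine ⟨S 0 * Real.exp (∑' k, (√(S k))⁻¹ ^ 2 * ‖G k‖ ^ 2), ?_⟩
  rintro _ ⟨n, rfl⟩
  refine (hS n).trans (mul_le_mul_of_nonneg_left ?_ h.S_zero_pos.le)
  exact Real.exp_le_exp.2 (hsum.sum_le_tsum _ fun k _ => by positivity)

variable [CompleteSpace E] {g : E → ℝ} {L : ℝ}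

theorem value_succ_le (hL : 0 < L) (hg : Differentiable ℝ g)
    (hsmooth : ∀ x y, ‖gradient g x - gradient g y‖ ≤ L * ‖x - y‖) (n : ℕ) :
    g (θ (n + 1)) ≤ g (θ n) - α₀ * ((√(S (n + 1)))⁻¹ * inner ℝ (gradient g (θ n)) (G n))
      + L * α₀ ^ 2 * ((√(S (n + 1)))⁻¹ ^ 2 * ‖G n‖ ^ 2) := by
  have hd := (abs_le.1 (abs_sub_sub_inner_gradient_le hL.le hg hsmooth (θ n) (θ (n + 1)))).2
  rw [h.succ_eq n, add_sub_cancel_left, h.norm_step n, inner_neg_right, inner_smul_right] at hd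
  rw [h.succ_eq n]
  linarith

theorem value_succ_le_of_norm_le (hL : 0 < L) (hg : Differentiable ℝ g)
    (hsmooth : ∀ x y, ‖gradient g x - gradient g y‖ ≤ L * ‖x - y‖) {V : ℝ} (n : ℕ)
    (hV : ‖gradient g (θ n)‖ ≤ V) :
    g (θ (n + 1)) - g (θ n) + α₀ * ((√(S n))⁻¹ * ‖gradient g (θ n)‖ ^ 2) ≤
      -α₀ * ((√(S n))⁻¹ * inner ℝ (gradient g (θ n)) (G n - gradient g (θ n)))
      + (α₀ * V + L * α₀ ^ 2) * ((√(S n))⁻¹ ^ 2 * ‖G n‖ ^ 2) := by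
  have h1 := h.value_succ_le hL hg hsmooth n
  have h2 := h.rate_succ_sq_le n
  have h3 := h.rate_sub_mul_le n
  have h4 := h.rate_succ_le n
  have h5 := real_inner_le_norm (gradient g (θ n)) (G n)
  rw [inner_sub_right, real_inner_self_eq_norm_sq]
  set a := (√(S n))⁻¹
  set b := (√(S (n + 1)))⁻¹
  set i := inner ℝ (gradient g (θ n)) (G n)
  have hα := h.α₀_pos
  have h6 : (a - b) * i ≤ V * (a ^ 2 * ‖G n‖ ^ 2) := by
    calc (a - b) * i ≤ (a - b) * (‖gradient g (θ n)‖ * ‖G n‖) :=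
          mul_le_mul_of_nonneg_left h5 (sub_nonneg.2 h4)
      _ = ‖gradient g (θ n)‖ * ((a - b) * ‖G n‖) := by ring
      _ ≤ V * (a ^ 2 * ‖G n‖ ^ 2) :=
          mul_le_mul hV h3 (mul_nonneg (sub_nonneg.2 h4) (norm_nonneg _))
            ((norm_nonneg _).trans hV)
  have h7 : α₀ * ((a - b) * i) ≤ α₀ * (V * (a ^ 2 * ‖G n‖ ^ 2)) := by gcongr
  have h8 : L * α₀ ^ 2 * (b ^ 2 * ‖G n‖ ^ 2) ≤ L * α₀ ^ 2 * (a ^ 2 * ‖G n‖ ^ 2) := by gcongr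
  linarith

omit [CompleteSpace E] in
theorem eventually_displacement {v : ℕ → E}
    (hsq : ∀ j : ℕ, Summable fun n =>
      normCutoff (1 / ((j : ℝ) + 1)) (v n) * ((√(S n))⁻¹ ^ 2 * ‖G n‖ ^ 2))
    (hnoise : ∀ j : ℕ, ∃ l, Tendsto (fun n => ∑ k ∈ Finset.range n,
      (normCutoff (1 / ((j : ℝ) + 1)) (v k) * (√(S k))⁻¹) • (G k - v k)) atTop (𝓝 l))
    {η ε : ℝ} (hη : 0 < η) (hε : 0 < ε) :
    ∀ᶠ M in atTop, ∀ m ≥ M, ∀ n ≥ m, (∀ k ∈ Finset.Ico m n, η < ‖v k‖) →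
      ‖θ n - θ m‖ ≤ α₀ * ∑ k ∈ Finset.Ico m n, (√(S k))⁻¹ * ‖v k‖ + ε := by
  have hα := h.α₀_pos
  obtain ⟨j, hj⟩ := exists_nat_one_div_lt hη
  have hj0 : (0 : ℝ) < 1 / ((j : ℝ) + 1) := by positivity
  have hε' : 0 < ε / (2 * α₀) := by positivity
  filter_upwards [eventually_norm_sum_Ico_lt (hnoise j) hε',
    eventually_norm_sum_Ico_lt ⟨_, (hsq j).hasSum.tendsto_sum_nat⟩ hε'] with M h1 h2 m hm n hn hk
  specialize h1 m hm n hn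
  specialize h2 m hm n hn
  have hcut : ∀ k ∈ Finset.Ico m n, normCutoff (1 / ((j : ℝ) + 1)) (v k) = 1 :=
    fun k hk' => normCutoff_eq_one hj0 (hj.trans (hk k hk')).le
  have e1 : ∑ k ∈ Finset.Ico m n,
      (normCutoff (1 / ((j : ℝ) + 1)) (v k) * (√(S k))⁻¹) • (G k - v k) =
      ∑ k ∈ Finset.Ico m n, (√(S k))⁻¹ • (G k - v k) :=
    Finset.sum_congr rfl fun k hk' => by rw [hcut k hk', one_mul]
  have e2 : ∑ k ∈ Finset.Ico m n,
      normCutoff (1 / ((j : ℝ) + 1)) (v k) * ((√(S k))⁻¹ ^ 2 * ‖G k‖ ^ 2) =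
      ∑ k ∈ Finset.Ico m n, (√(S k))⁻¹ ^ 2 * ‖G k‖ ^ 2 :=
    Finset.sum_congr rfl fun k hk' => by rw [hcut k hk', one_mul]
  rw [e1] at h1
  rw [e2] at h2
  have e3 : θ n - θ m = α₀ • (∑ k ∈ Finset.Ico m n, ((√(S k))⁻¹ - (√(S (k + 1)))⁻¹) • G k)
      - α₀ • (∑ k ∈ Finset.Ico m n, (√(S k))⁻¹ • (G k - v k))
      - α₀ • (∑ k ∈ Finset.Ico m n, (√(S k))⁻¹ • v k) := by
    rw [← smul_sub, ← smul_sub, ← Finset.sum_sub_distrib, ← Finset.sum_sub_distrib,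
      ← Finset.sum_Ico_sub (f := θ) hn, Finset.smul_sum]
    refine Finset.sum_congr rfl fun k _ => ?_
    rw [h.succ_eq k]
    module
  have b1 : ‖∑ k ∈ Finset.Ico m n, ((√(S k))⁻¹ - (√(S (k + 1)))⁻¹) • G k‖ ≤
      ∑ k ∈ Finset.Ico m n, (√(S k))⁻¹ ^ 2 * ‖G k‖ ^ 2 :=
    norm_sum_le_of_le _ fun k _ => by
      rw [norm_smul, Real.norm_of_nonneg (sub_nonneg.2 (h.rate_succ_le k))]
      exact h.rate_sub_mul_le k
  have b2 : ‖∑ k ∈ Finset.Ico m n, (√(S k))⁻¹ • v k‖ ≤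
      ∑ k ∈ Finset.Ico m n, (√(S k))⁻¹ * ‖v k‖ :=
    norm_sum_le_of_le _ fun k _ => by
      rw [norm_smul, Real.norm_of_nonneg (h.rate_pos k).le]
  rw [e3]
  refine (norm_sub_le _ _).trans ((add_le_add (norm_sub_le _ _) le_rfl).trans ?_)
  rw [norm_smul, norm_smul, norm_smul, Real.norm_of_nonneg hα.le]
  have b3 := b1.trans ((le_abs_self _).trans h2.le)
  have b4 : α₀ * (ε / (2 * α₀)) = ε / 2 := by field_simp
  nlinarith [mul_le_mul_of_nonneg_left b3 hα.le, mul_le_mul_of_nonneg_left h1.le hα.le,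
    mul_le_mul_of_nonneg_left b2 hα.le]

theorem eventually_descent (hL : 0 < L) (hg : Differentiable ℝ g) (hnonneg : ∀ x, 0 ≤ g x)
    (hsmooth : ∀ x y, ‖gradient g x - gradient g y‖ ≤ L * ‖x - y‖)
    (hsq : ∀ j : ℕ, Summable fun n =>
      normCutoff (1 / ((j : ℝ) + 1)) (gradient g (θ n)) * ((√(S n))⁻¹ ^ 2 * ‖G n‖ ^ 2))
    (hnoise : ∀ N : ℕ, ∃ l, Tendsto (fun n => ∑ k ∈ Finset.range n,
      (√(S k))⁻¹ * (levelCutoff N (g (θ k)) *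
        inner ℝ (gradient g (θ k)) (G k - gradient g (θ k)))) atTop (𝓝 l))
    {η ε : ℝ} (hη : 0 < η) (hε : 0 < ε) (N : ℝ) :
    ∀ᶠ M in atTop, ∀ m ≥ M, ∀ n ≥ m,
      (∀ k ∈ Finset.Ico m n, η < ‖gradient g (θ k)‖ ∧ g (θ k) ≤ N) →
      g (θ n) + α₀ * ∑ k ∈ Finset.Ico m n, (√(S k))⁻¹ * ‖gradient g (θ k)‖ ^ 2
        ≤ g (θ m) + ε := by
  have hα := h.α₀_pos
  obtain ⟨j, hj⟩ := exists_nat_one_div_lt hη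
  obtain ⟨N', hN'⟩ := exists_nat_ge N
  have hj0 : (0 : ℝ) < 1 / ((j : ℝ) + 1) := by positivity
  set V : ℝ := √(4 * L * N')
  set C : ℝ := α₀ * V + L * α₀ ^ 2
  have hC : 0 < C := by positivity
  filter_upwards [eventually_norm_sum_Ico_lt (hnoise N') (ε := ε / (2 * α₀)) (by positivity),
    eventually_norm_sum_Ico_lt ⟨_, (hsq j).hasSum.tendsto_sum_nat⟩ (ε := ε / (2 * C))
      (by positivity)] with M h1 h2 m hm n hn hk
  specialize h1 m hm n hn
  specialize h2 m hm n hn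
  have hcut : ∀ k ∈ Finset.Ico m n, normCutoff (1 / ((j : ℝ) + 1)) (gradient g (θ k)) = 1 :=
    fun k hk' => normCutoff_eq_one hj0 (hj.trans (hk k hk').1).le
  have hlev : ∀ k ∈ Finset.Ico m n, levelCutoff N' (g (θ k)) = 1 :=
    fun k hk' => levelCutoff_eq_one ((hk k hk').2.trans hN')
  rw [Finset.sum_congr rfl fun k hk' => by rw [hlev k hk', one_mul]] at h1
  rw [Finset.sum_congr rfl fun k hk' => by rw [hcut k hk', one_mul]] at h2
  have hsum : ∑ k ∈ Finset.Ico m n, (g (θ (k + 1)) - g (θ k)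
        + α₀ * ((√(S k))⁻¹ * ‖gradient g (θ k)‖ ^ 2)) ≤
      ∑ k ∈ Finset.Ico m n, (-α₀ * ((√(S k))⁻¹ *
          inner ℝ (gradient g (θ k)) (G k - gradient g (θ k)))
        + C * ((√(S k))⁻¹ ^ 2 * ‖G k‖ ^ 2)) :=
    Finset.sum_le_sum fun k hk' => h.value_succ_le_of_norm_le hL hg hsmooth k <|
      Real.le_sqrt_of_sq_le <| (norm_gradient_sq_le hL hg hnonneg hsmooth _).trans <|
        mul_le_mul_of_nonneg_left ((hk k hk').2.trans hN') (by positivity)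
  rw [Finset.sum_add_distrib, Finset.sum_add_distrib, ← Finset.mul_sum, ← Finset.mul_sum,
    ← Finset.mul_sum, Finset.sum_Ico_sub (f := fun k => g (θ k)) hn] at hsum
  have b1 := (abs_lt.1 h1).1
  have b2 := (abs_lt.1 h2).2
  have b3 : α₀ * (ε / (2 * α₀)) = ε / 2 := by field_simp
  have b4 : C * (ε / (2 * C)) = ε / 2 := by field_simp
  nlinarith [mul_le_mul_of_nonneg_left b1.le hα.le, mul_le_mul_of_nonneg_left b2.le hC.le]

omit [CompleteSpace E] in
theorem norm_step_tendsto_zero {v : ℕ → E} (hrate : Tendsto (fun n => (√(S n))⁻¹) atTop (𝓝 0))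
    (hsq : ∀ j : ℕ, Summable fun n =>
      normCutoff (1 / ((j : ℝ) + 1)) (v n) * ((√(S n))⁻¹ ^ 2 * ‖G n‖ ^ 2))
    {δ₀ δ₁ : ℝ} (hδ₀ : 0 < δ₀) (hδ₁ : 0 < δ₁) (hsharp : ∀ n, ‖v n‖ ≤ δ₀ → ‖G n‖ ≤ δ₁) :
    Tendsto (fun n => α₀ * ((√(S (n + 1)))⁻¹ * ‖G n‖)) atTop (𝓝 0) := by
  have hα := h.α₀_pos
  obtain ⟨j, hj⟩ := exists_nat_one_div_lt hδ₀
  have hj0 : (0 : ℝ) < 1 / ((j : ℝ) + 1) := by positivity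
  have hlim : Tendsto (fun n => α₀ * ((√(S n))⁻¹ * δ₁
      + √(normCutoff (1 / ((j : ℝ) + 1)) (v n) * ((√(S n))⁻¹ ^ 2 * ‖G n‖ ^ 2)))) atTop (𝓝 0) := by
    simpa using ((hrate.mul_const δ₁).add
      ((hsq j).tendsto_atTop_zero.sqrt)).const_mul α₀
  refine squeeze_zero (fun n => ?_) (fun n => ?_) hlim
  · have := h.rate_pos (n + 1)
    positivity
  · refine mul_le_mul_of_nonneg_left ?_ hα.le
    have hrn := h.rate_pos n
    have h1 : (√(S (n + 1)))⁻¹ * ‖G n‖ ≤ (√(S n))⁻¹ * ‖G n‖ :=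
      mul_le_mul_of_nonneg_right (h.rate_succ_le n) (norm_nonneg _)
    refine h1.trans ?_
    rcases le_total ‖v n‖ δ₀ with hv | hv
    · have := mul_le_mul_of_nonneg_left (hsharp n hv) hrn.le
      linarith [Real.sqrt_nonneg (normCutoff (1 / ((j : ℝ) + 1)) (v n) *
        ((√(S n))⁻¹ ^ 2 * ‖G n‖ ^ 2))]
    · rw [normCutoff_eq_one hj0 (hj.le.trans hv), one_mul, ← mul_pow,
        Real.sqrt_sq (by positivity)]
      have : 0 < (√(S n))⁻¹ * δ₁ := by positivity
      linarith

end AdaGradNormPath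

end Path

/-- Between any two levels there is a band of levels on which the gradient is bounded below. -/
theorem exists_noncritical_band {E : Type*} [NormedAddCommGroup E] [InnerProductSpace ℝ E]
    [FiniteDimensional ℝ E] {g : E → ℝ} (hg : Continuous g)
    (hgrad : Continuous (gradient g)) (hcoer : Tendsto g (Bornology.cobounded E) atTop)
    (hsard : interior (closure {y : ℝ | ∃ x : E, gradient g x = 0 ∧ g x = y}) = ∅)
    {a b : ℝ} (hab : a < b) :
    ∃ a' b' η : ℝ, a < a' ∧ a' < b' ∧ b' < b ∧ 0 < η ∧
      ∀ x, a' ≤ g x → g x ≤ b' → η < ‖gradient g x‖ := by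
  set K := {y : ℝ | ∃ x : E, gradient g x = 0 ∧ g x = y}
  obtain ⟨y, hy, hyK⟩ : ∃ y ∈ Set.Ioo a b, y ∉ closure K := by
    by_contra! hcon
    have : Set.Ioo a b ⊆ interior (closure K) := interior_maximal hcon isOpen_Ioo
    rw [hsard] at this
    exact this (⟨by linarith, by linarith⟩ : (a + b) / 2 ∈ Set.Ioo a b)
  obtain ⟨ε, hε, hball⟩ := Metric.isOpen_iff.1
    (isOpen_Ioo.inter isClosed_closure.isOpen_compl) y ⟨hy, hyK⟩
  rw [Real.ball_eq_Ioo] at hball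
  have ha' := (hball (⟨by linarith, by linarith⟩ : y - ε / 2 ∈ Set.Ioo (y - ε) (y + ε))).1.1
  have hb' := (hball (⟨by linarith, by linarith⟩ : y + ε / 2 ∈ Set.Ioo (y - ε) (y + ε))).1.2
  have hclosed : IsClosed (g ⁻¹' Set.Icc (y - ε / 2) (y + ε / 2)) := isClosed_Icc.preimage hg
  have hbdd : Bornology.IsBounded (g ⁻¹' Set.Icc (y - ε / 2) (y + ε / 2)) := by
    refine Bornology.isBounded_def.2 ?_
    filter_upwards [hcoer.eventually_gt_atTop (y + ε / 2)] with x hx hx'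
    exact absurd hx'.2 (not_le.2 hx)
  have hcomp := Metric.isCompact_of_isClosed_isBounded hclosed hbdd
  obtain ⟨η, hη, hηle⟩ := hcomp.exists_forall_le' (f := fun x => ‖gradient g x‖)
    hgrad.norm.continuousOn (a := 0) fun x hx => norm_pos_iff.2 fun h0 =>
      (hball (⟨by linarith [hx.1], by linarith [hx.2]⟩ : g x ∈ Set.Ioo (y - ε) (y + ε))).2
        (subset_closure ⟨x, h0, rfl⟩)
  exact ⟨y - ε / 2, y + ε / 2, η / 2, ha', by linarith, hb', by linarith,
    fun x h1 h2 => by linarith [hηle x ⟨h1, h2⟩]⟩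

/-- Convergence of the gradients along an AdaGrad-Norm trajectory, given the summability
properties that hold almost surely. -/
theorem AdaGradNormPath.gradient_tendsto_zero {E : Type*} [NormedAddCommGroup E]
    [InnerProductSpace ℝ E] [FiniteDimensional ℝ E] {α₀ : ℝ} {G θ : ℕ → E} {S : ℕ → ℝ}
    (h : AdaGradNormPath α₀ G θ S) {g : E → ℝ} {L : ℝ}
    (hL : 0 < L) (hg : Differentiable ℝ g) (hgrad : Continuous (gradient g))
    (hnonneg : ∀ x, 0 ≤ g x)
    (hsmooth : ∀ x y, ‖gradient g x - gradient g y‖ ≤ L * ‖x - y‖)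
    (hcoer : Tendsto g (Bornology.cobounded E) atTop)
    (hsard : interior (closure {y : ℝ | ∃ x : E, gradient g x = 0 ∧ g x = y}) = ∅)
    {δ₀ δ₁ : ℝ} (hδ₀ : 0 < δ₀) (hδ₁ : 0 < δ₁)
    (hsharp : ∀ n, ‖gradient g (θ n)‖ ≤ δ₀ → ‖G n‖ ≤ δ₁)
    (hfreq : ∃ N, ∃ᶠ n in atTop, g (θ n) ≤ N)
    (hgrad_sq : Summable fun n => (√(S n))⁻¹ ^ 2 * ‖gradient g (θ n)‖ ^ 2)
    (hsq : ∀ j : ℕ, Summable fun n =>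
      normCutoff (1 / ((j : ℝ) + 1)) (gradient g (θ n)) * ((√(S n))⁻¹ ^ 2 * ‖G n‖ ^ 2))
    (hvec : ∀ j : ℕ, ∃ l, Tendsto (fun n => ∑ k ∈ Finset.range n,
      (normCutoff (1 / ((j : ℝ) + 1)) (gradient g (θ k)) * (√(S k))⁻¹) •
        (G k - gradient g (θ k))) atTop (𝓝 l))
    (hval : ∀ N : ℕ, ∃ l, Tendsto (fun n => ∑ k ∈ Finset.range n,
      (√(S k))⁻¹ * (levelCutoff N (g (θ k)) *
        inner ℝ (gradient g (θ k)) (G k - gradient g (θ k)))) atTop (𝓝 l)) :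
    Tendsto (fun n => gradient g (θ n)) atTop (𝓝 0) := by
  have hα := h.α₀_pos
  by_cases hbdd : BddAbove (Set.range S)
  · obtain ⟨B, hB⟩ := hbdd
    have hBn : ∀ n, S n ≤ B := fun n => hB ⟨n, rfl⟩
    rw [tendsto_zero_iff_norm_tendsto_zero]
    have h1 := (hgrad_sq.tendsto_atTop_zero.const_mul B).sqrt
    rw [mul_zero, Real.sqrt_zero] at h1
    refine squeeze_zero (fun n => norm_nonneg _) (fun n => ?_) h1
    refine Real.le_sqrt_of_sq_le ?_
    rw [inv_pow, Real.sq_sqrt (h.S_pos n).le, ← mul_assoc, ← div_eq_mul_inv]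
    refine le_mul_of_one_le_left (by positivity) ?_
    rw [one_le_div (h.S_pos n)]
    exact hBn n
  have hSlim : Tendsto S atTop atTop :=
    tendsto_atTop_atTop_of_monotone h.S_mono fun B => by
      by_contra! hcon
      exact hbdd ⟨B, by rintro _ ⟨n, rfl⟩; exact (hcon n).le⟩
  have hrate : Tendsto (fun n => (√(S n))⁻¹) atTop (𝓝 0) :=
    tendsto_inv_atTop_zero.comp (Real.tendsto_sqrt_atTop.comp hSlim)
  have hstep := h.norm_step_tendsto_zero hrate hsq hδ₀ hδ₁ hsharp
  -- the values cannot cross a noncritical band upwards infinitely often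
  have hcross : ∀ a b, a < b → (∃ᶠ n in atTop, g (θ n) ≤ a) → ∀ᶠ n in atTop, g (θ n) < b := by
    intro a b hab hfr
    obtain ⟨a', b', η, ha', hab', hb', hη, hband⟩ :=
      exists_noncritical_band hg.continuous hgrad hcoer hsard hab
    have hε : 0 < (b' - a') / 3 := by linarith
    refine (eventually_lt_of_frequently_le (y := fun n => g (θ n)) (lo := a')
      (mid := a' + (b' - a') / 3) (hi := b') hab' (hfr.mono fun n hn => hn.trans ha'.le)
      ?_ ?_).mono fun n hn => hn.trans hb'
    · have h1 : Tendsto (fun n => √(4 * L * a') * (α₀ * ((√(S (n + 1)))⁻¹ * ‖G n‖))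
          + L * (α₀ * ((√(S (n + 1)))⁻¹ * ‖G n‖)) ^ 2) atTop (𝓝 0) := by
        simpa using (hstep.const_mul (√(4 * L * a'))).add ((hstep.pow 2).const_mul L)
      filter_upwards [h1.eventually_lt_const hε] with n hn hga
      have hd := (abs_le.1 (abs_sub_sub_inner_gradient_le hL.le hg hsmooth (θ n) (θ (n + 1)))).2
      rw [h.succ_eq n, add_sub_cancel_left] at hd
      rw [h.succ_eq n]
      have hi := real_inner_le_norm (gradient g (θ n)) (-((α₀ * (√(S (n + 1)))⁻¹) • G n))
      rw [h.norm_step] at hd hi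
      have hv : ‖gradient g (θ n)‖ ≤ √(4 * L * a') := Real.le_sqrt_of_sq_le <|
        (norm_gradient_sq_le hL hg hnonneg hsmooth _).trans
          (mul_le_mul_of_nonneg_left hga (by positivity))
      have := mul_le_mul_of_nonneg_right hv (h.norm_step n ▸ norm_nonneg _ :
        0 ≤ α₀ * ((√(S (n + 1)))⁻¹ * ‖G n‖))
      linarith
    · filter_upwards [h.eventually_descent hL hg hnonneg hsmooth hsq hval hη hε b']
        with M hM m hm n hn hmid hk
      have := hM m hm n hn fun k hk' => ⟨hband _ (hk k hk').1.le (hk k hk').2.le, (hk k hk').2.le⟩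
      have hpos : 0 ≤ α₀ * ∑ k ∈ Finset.Ico m n, (√(S k))⁻¹ * ‖gradient g (θ k)‖ ^ 2 :=
        mul_nonneg hα.le (Finset.sum_nonneg fun k _ => by positivity)
      linarith
  obtain ⟨N, hN⟩ := hfreq
  have hbound : ∀ᶠ n in atTop, g (θ n) < N + 1 := hcross N (N + 1) (by linarith) hN
  obtain ⟨c, hc⟩ : ∃ c, Tendsto (fun n => g (θ n)) atTop (𝓝 c) := by
    refine tendsto_of_no_upcrossings dense_univ (fun a _ b _ hab ⟨h1, h2⟩ => ?_)
      ⟨N + 1, ?_⟩ ⟨0, ?_⟩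
    · exact h2 ((hcross a b hab (h1.mono fun _ => le_of_lt)).mono fun n hn => not_lt.2 hn.le)
    · exact hbound.mono fun _ => le_of_lt
    · exact Filter.eventually_map.2 (Eventually.of_forall fun n => hnonneg (θ n))
  rw [tendsto_zero_iff_norm_tendsto_zero, Metric.tendsto_nhds]
  intro ρ hρ
  simp only [dist_zero_right, norm_norm]
  set η := ρ / 3 with hηdef
  have hη : 0 < η := by positivity
  refine eventually_lt_of_frequently_le (y := fun n => ‖gradient g (θ n)‖) (lo := η)
    (mid := 2 * η) (by linarith) ?_ ?_ ?_
  · intro hev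
    apply hbdd
    obtain ⟨M, hM⟩ := eventually_atTop.1 hev
    obtain ⟨j, hj⟩ := exists_nat_one_div_lt hη
    refine h.bddAbove_of_summable ((summable_nat_add_iff M).1
      (((summable_nat_add_iff M).2 (hsq j)).congr fun n => ?_))
    rw [normCutoff_eq_one (by positivity) (hj.le.trans (not_le.1 (hM (n + M) (by omega))).le),
      one_mul]
  · filter_upwards [(hstep.const_mul L).eventually_lt_const (u := η) (by simpa using hη)]
      with n hn hlow
    have h1 := hsmooth (θ (n + 1)) (θ n)
    nth_rw 2 [h.succ_eq n] at h1
    rw [add_sub_cancel_left, h.norm_step] at h1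
    have h2 := norm_le_norm_add_norm_sub' (gradient g (θ (n + 1))) (gradient g (θ n))
    linarith
  · set ε := min (η ^ 2 / (8 * L)) (η / (4 * L)) with hεdef
    have hε : 0 < ε := by positivity
    have hcauchy : ∀ᶠ M in atTop, ∀ m ≥ M, ∀ n ≥ m, g (θ m) - g (θ n) ≤ ε := by
      obtain ⟨M, hM⟩ := Metric.cauchySeq_iff.1 hc.cauchySeq ε hε
      filter_upwards [eventually_ge_atTop M] with M' hM' m hm n hn
      exact (le_abs_self _).trans (hM m (by omega) n (by omega)).le
    have hbound' := eventually_forall_ge_atTop.2 hbound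
    filter_upwards [h.eventually_descent hL hg hnonneg hsmooth hsq hval hη hε (N + 1),
      h.eventually_displacement hsq hvec hη hε, hcauchy, hbound']
      with M h1 h2 h3 h4 m hm n hn hmid hk
    have d1 := h1 m hm n hn fun k hk' =>
      ⟨(hk k hk').1, (h4 k (hm.trans (Finset.mem_Ico.1 hk').1)).le⟩
    have d2 := h2 m hm n hn fun k hk' => (hk k hk').1
    have d3 := h3 m hm n hn
    have d4 : η * ∑ k ∈ Finset.Ico m n, (√(S k))⁻¹ * ‖gradient g (θ k)‖ ≤
        ∑ k ∈ Finset.Ico m n, (√(S k))⁻¹ * ‖gradient g (θ k)‖ ^ 2 := by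
      rw [Finset.mul_sum]
      refine Finset.sum_le_sum fun k hk' => ?_
      have p := mul_le_mul_of_nonneg_left (hk k hk').1.le
        (mul_nonneg (h.rate_pos k).le (norm_nonneg (gradient g (θ k))))
      linarith
    have d5 : η * ‖θ n - θ m‖ ≤ 2 * ε + η * ε := by
      nlinarith [mul_le_mul_of_nonneg_left d4 hα.le, mul_le_mul_of_nonneg_left d2 hη.le]
    have d6 : η * (L * ‖θ n - θ m‖) < η * η := by
      have e1 : L * ε ≤ η ^ 2 / 8 := by
        have := mul_le_mul_of_nonneg_left (min_le_left (η ^ 2 / (8 * L)) (η / (4 * L))) hL.le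
        rwa [← hεdef, show L * (η ^ 2 / (8 * L)) = η ^ 2 / 8 by field_simp] at this
      have e2 : L * ε ≤ η / 4 := by
        have := mul_le_mul_of_nonneg_left (min_le_right (η ^ 2 / (8 * L)) (η / (4 * L))) hL.le
        rwa [← hεdef, show L * (η / (4 * L)) = η / 4 by field_simp] at this
      nlinarith [mul_le_mul_of_nonneg_left d5 hL.le, mul_le_mul_of_nonneg_left e2 hη.le]
    have d7 := lt_of_mul_lt_mul_left d6 hη.le
    have d8 := hsmooth (θ n) (θ m)
    have d9 := norm_le_norm_add_norm_sub' (gradient g (θ n)) (gradient g (θ m))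
    linarith

namespace AdaGradNormPath

variable {E : Type*} [NormedAddCommGroup E] [InnerProductSpace ℝ E] [CompleteSpace E]
  {g : E → ℝ} {L σ₀ σ₁ α₀ : ℝ}

/-- One-step inequality for a Lyapunov function controlling the sum of
`S n ^ (-1) * ‖∇g (θ n)‖ ^ 2`. -/
theorem exists_lyapunov_value_le (hL : 0 < L) (hg : Differentiable ℝ g) (hnonneg : ∀ x, 0 ≤ g x)
    (hsmooth : ∀ x y, ‖gradient g x - gradient g y‖ ≤ L * ‖x - y‖)
    (hσ₀ : 0 ≤ σ₀) (hσ₁ : 0 ≤ σ₁) (hα₀ : 0 ≤ α₀) (A : ℝ) (hA : 0 ≤ A) :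
    ∃ c C, 0 ≤ c ∧ 0 ≤ C ∧ ∀ {G θ : ℕ → E} {S : ℕ → ℝ}, AdaGradNormPath α₀ G θ S →
      (√(S 0))⁻¹ ≤ A → ∀ n,
      g (θ (n + 1)) * ((√(S (n + 1)))⁻¹ + c * (√(S (n + 1)))⁻¹ ^ 2) + C * (√(S (n + 1)))⁻¹ ≤
        g (θ n) * ((√(S n))⁻¹ + c * (√(S n))⁻¹ ^ 2) + C * (√(S n))⁻¹
        - α₀ * (√(S n))⁻¹ ^ 2 * inner ℝ (gradient g (θ n)) (G n)
        + α₀ / 2 * ((√(S n))⁻¹ ^ 2 * ‖gradient g (θ n)‖ ^ 2 /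
          (σ₀ * ‖gradient g (θ n)‖ ^ 2 + σ₁ + 1)) * ‖G n‖ ^ 2
        + α₀ / 4 * ((√(S n))⁻¹ ^ 2 * ‖gradient g (θ n)‖ ^ 2) := by
  set c := 2 * α₀ * L * σ₀ with hc
  have hc0 : 0 ≤ c := by positivity
  refine ⟨c, 2 * L * α₀ ^ 2 + 2 * A * c * L * α₀ ^ 2 + 2 * A * α₀ * c ^ 2 + α₀ * A * (σ₁ + 1),
    hc0, by positivity, fun {G θ S} h hSA n => ?_⟩
  have h1 := h.value_succ_le hL hg hsmooth n
  have haA := (h.rate_le n).trans hSA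
  have hb := h.rate_pos (n + 1)
  have hab := h.rate_succ_le n
  have h4 := h.rate_sq_mul_le n
  have h5 := (abs_le.1 (abs_real_inner_le_norm (gradient g (θ n)) (G n)))
  have h6 := norm_gradient_sq_le hL hg hnonneg hsmooth (θ n)
  have hg0 := hnonneg (θ n)
  have hv0 := norm_nonneg (gradient g (θ n))
  have hG0 := norm_nonneg (G n)
  generalize (√(S n))⁻¹ = a at *
  generalize (√(S (n + 1)))⁻¹ = b at *
  generalize inner ℝ (gradient g (θ n)) (G n) = i at *
  generalize ‖gradient g (θ n)‖ = v at *
  generalize ‖G n‖ = γ at *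
  generalize g (θ n) = y at *
  generalize g (θ (n + 1)) = y' at *
  have ha : 0 < a := hb.trans_le hab
  set D := a - b with hD
  have hD0 : 0 ≤ D := sub_nonneg.2 hab
  have hbA : b ≤ A := hab.trans haA
  have hb3 : b ^ 3 * γ ^ 2 ≤ 2 * D := by
    have := mul_le_mul_of_nonneg_left hab (by positivity : 0 ≤ b ^ 2 * γ ^ 2)
    nlinarith
  have hb4 : b ^ 4 * γ ^ 2 ≤ 2 * A * D := by
    have := mul_le_mul hbA hb3 (by positivity) hA
    nlinarith
  have hT : a ^ 2 - b ^ 2 ≤ 2 * A * D := by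
    have := mul_le_mul_of_nonneg_right (add_le_add haA hbA) hD0
    nlinarith
  have hT0 : 0 ≤ a ^ 2 - b ^ 2 := by nlinarith
  set q := σ₀ * v ^ 2 + σ₁ + 1 with hq
  have hq0 : 0 < q := by positivity
  have hqy : q ≤ σ₀ * (4 * L * y) + (σ₁ + 1) := by
    have := mul_le_mul_of_nonneg_left h6 hσ₀
    linarith
  have e1 : (a ^ 2 - b ^ 2) * i ≤ 1 / 2 * (a ^ 2 * v ^ 2 / q) * γ ^ 2
      + 1 / 2 * q * (a ^ 2 - b ^ 2) := by
    have k1 : v * γ ≤ 1 / 2 * (v ^ 2 / q * γ ^ 2) + 1 / 2 * q := by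
      have : v ^ 2 / q * γ ^ 2 + q - 2 * (v * γ) = (v * γ - q) ^ 2 / q := by field_simp; ring
      have : 0 ≤ (v * γ - q) ^ 2 / q := by positivity
      linarith
    have k2 : (a ^ 2 - b ^ 2) * (v ^ 2 / q * γ ^ 2) ≤ a ^ 2 * (v ^ 2 / q * γ ^ 2) :=
      mul_le_mul_of_nonneg_right (by nlinarith) (by positivity)
    have k3 := mul_le_mul_of_nonneg_left (h5.2.trans k1) hT0
    have k4 : a ^ 2 * v ^ 2 / q * γ ^ 2 = a ^ 2 * (v ^ 2 / q * γ ^ 2) := by ring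
    linarith
  have e2 : -(c * b ^ 3 * i) ≤ 1 / 4 * (a ^ 2 * v ^ 2) + c ^ 2 * (b ^ 4 * γ ^ 2) := by
    have k1 := mul_le_mul_of_nonneg_left (neg_le_of_neg_le h5.1) (by positivity : 0 ≤ c * b ^ 3)
    have k2 : b ^ 2 * v ^ 2 ≤ a ^ 2 * v ^ 2 := by gcongr
    nlinarith [sq_nonneg (b * v / 2 - c * b ^ 2 * γ)]
  have e3 : (b + c * b ^ 2) * y' ≤ (b + c * b ^ 2) *
      (y - α₀ * (b * i) + L * α₀ ^ 2 * (b ^ 2 * γ ^ 2)) := by gcongr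
  have e4 := mul_le_mul_of_nonneg_left e1 hα₀
  have e5 := mul_le_mul_of_nonneg_left e2 hα₀
  have e6 : L * α₀ ^ 2 * (b ^ 3 * γ ^ 2) ≤ L * α₀ ^ 2 * (2 * D) := by gcongr
  have e7 : c * L * α₀ ^ 2 * (b ^ 4 * γ ^ 2) ≤ c * L * α₀ ^ 2 * (2 * A * D) := by gcongr
  have e8 : α₀ * c ^ 2 * (b ^ 4 * γ ^ 2) ≤ α₀ * c ^ 2 * (2 * A * D) := by gcongr
  have e9 : α₀ / 2 * (q * (a ^ 2 - b ^ 2)) ≤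
      α₀ / 2 * ((σ₀ * (4 * L * y) + (σ₁ + 1)) * (a ^ 2 - b ^ 2)) := by gcongr
  have e10 : α₀ / 2 * (σ₁ + 1) * (a ^ 2 - b ^ 2) ≤ α₀ / 2 * (σ₁ + 1) * (2 * A * D) := by gcongr
  have e11 : 0 ≤ y * D := mul_nonneg hg0 hD0
  have e12 : α₀ / 2 * ((σ₀ * (4 * L * y)) * (a ^ 2 - b ^ 2)) = c * y * (a ^ 2 - b ^ 2) := by
    rw [hc]; ring
  clear_value c q
  have hb' : b = a - D := by rw [hD]; ring
  linear_combination e3 + e4 + e5 + e6 + e7 + e8 + e9 + e10 + e11 + e12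

end AdaGradNormPath

/-- If the gradient is bounded below outside of a compact set, then above some level the gradient
stays bounded below along steps of bounded length. -/
theorem exists_level_of_gradient_small {E : Type*} [NormedAddCommGroup E] [InnerProductSpace ℝ E]
    [FiniteDimensional ℝ E] {g : E → ℝ} (hg : Continuous g) {δt : ℝ}
    (hflat : ∀ᶠ x in Bornology.cobounded E, δt < ‖gradient g x‖) (α : ℝ) :
    ∃ Δ, 0 ≤ Δ ∧ ∀ x δ : E, ‖gradient g x‖ < δt → ‖δ‖ ≤ α → g x ≤ Δ ∧ g (x + δ) ≤ Δ := by
  have : ProperSpace E := FiniteDimensional.proper ℝ E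
  obtain ⟨r, hr⟩ := (Bornology.isBounded_def.2 (mem_of_superset hflat fun x hx => not_not.2 hx) :
    Bornology.IsBounded {x : E | ¬ δt < ‖gradient g x‖}).exists_norm_le
  obtain ⟨C, hC⟩ := (isCompact_closedBall (0 : E) (r + |α|)).exists_bound_of_continuousOn
    hg.continuousOn
  refine ⟨max C 0, le_max_right _ _, fun x δ hx hδ => ?_⟩
  have hxr := hr x (not_lt.2 hx.le)
  constructor
  · refine (le_abs_self _).trans ((hC x ?_).trans (le_max_left _ _))
    rw [mem_closedBall_zero_iff]
    linarith [abs_nonneg α]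
  · refine (le_abs_self _).trans ((hC (x + δ) ?_).trans (le_max_left _ _))
    rw [mem_closedBall_zero_iff]
    exact (norm_add_le _ _).trans (add_le_add hxr (hδ.trans (le_abs_self α)))

namespace AdaGradNormPath

variable {E : Type*} [NormedAddCommGroup E] [InnerProductSpace ℝ E] [CompleteSpace E]
  {g : E → ℝ} {L σ₀ σ₁ α₀ : ℝ}

/-- The real-number inequality behind the Lyapunov function for the squared excess. -/
theorem lyapunov_sq_scalar_le {a b v γ i q W W' K B Q c κ : ℝ} (hα₀ : 0 ≤ α₀) (hK : 0 ≤ K)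
    (hB : 0 < B) (hQ : 0 ≤ Q) (hc : c = α₀ * Q + 1)
    (hκ : κ = α₀ * Q + 8 * α₀ * c ^ 2 + 2 * c * K + 2 * B * K)
    (hb : 0 < b) (hab : b ≤ a) (h4 : b ^ 2 * γ ^ 2 * a ≤ 2 * (a - b))
    (h5 : |i| ≤ v * γ) (hq0 : 0 < q) (hqW : q ≤ Q * (W + 1))
    (hW : 0 ≤ W) (hs : W' ^ 2 ≤ W ^ 2 - 2 * α₀ * b * W * i + K * (W + 1) * (b ^ 2 * γ ^ 2)) :
    W' ^ 2 * (1 + c * b) + (κ ^ 2 + 2 * c * K) * b ≤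
      W ^ 2 * (1 + c * a) + (κ ^ 2 + 2 * c * K) * a - 2 * α₀ * (a * W) * i
        + (α₀ * (a * W) * (v ^ 2 / q) + K * a ^ 2 + K / B * (a * W)) * γ ^ 2
        + α₀ / 4 * (a * W) * v ^ 2 := by
  have ha : 0 < a := hb.trans_le hab
  have hc0 : 0 ≤ c := by rw [hc]; positivity
  set D := a - b with hD
  have hD0 : 0 ≤ D := sub_nonneg.2 hab
  have hb3 : b ^ 3 * γ ^ 2 ≤ 2 * D := by
    have := mul_le_mul_of_nonneg_left hab (by positivity : 0 ≤ b ^ 2 * γ ^ 2)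
    nlinarith
  have e1 : D * i ≤ 1 / 2 * a * (v ^ 2 / q) * γ ^ 2 + 1 / 2 * (Q * (W + 1)) * D := by
    have k1 : v * γ ≤ 1 / 2 * (v ^ 2 / q * γ ^ 2) + 1 / 2 * q := by
      have : v ^ 2 / q * γ ^ 2 + q - 2 * (v * γ) = (v * γ - q) ^ 2 / q := by field_simp; ring
      have : 0 ≤ (v * γ - q) ^ 2 / q := by positivity
      linarith
    have k2 : D * (v ^ 2 / q * γ ^ 2) ≤ a * (v ^ 2 / q * γ ^ 2) :=
      mul_le_mul_of_nonneg_right (by linarith) (by positivity)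
    have k3 := mul_le_mul_of_nonneg_left ((abs_le.1 h5).2.trans k1) hD0
    have k4 : D * q ≤ D * (Q * (W + 1)) := by gcongr
    linarith
  have e2 : -(2 * c * b ^ 2 * i) ≤ 1 / 4 * (a * v ^ 2) + 8 * c ^ 2 * D := by
    have k1 := mul_le_mul_of_nonneg_left (neg_le_of_neg_le (abs_le.1 h5).1)
      (by positivity : 0 ≤ 2 * c * b ^ 2)
    have k2 : b * v ^ 2 ≤ a * v ^ 2 := by gcongr
    have k3 : 0 ≤ b * (v / 2 - 2 * c * b * γ) ^ 2 := by positivity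
    have k4 : 4 * c ^ 2 * (b ^ 3 * γ ^ 2) ≤ 4 * c ^ 2 * (2 * D) := by gcongr
    linarith
  have e3 : b ^ 2 * γ ^ 2 ≤ 2 * B * D + B⁻¹ * (a * γ ^ 2) := by
    have k0 : b ^ 2 * γ ^ 2 ≤ a ^ 2 * γ ^ 2 := by gcongr
    rcases le_total a B⁻¹ with haB | haB
    · have k1 : a * (a * γ ^ 2) ≤ B⁻¹ * (a * γ ^ 2) := by gcongr
      have k2 : 0 ≤ 2 * B * D := by positivity
      linarith
    · have k1 : 1 ≤ B * a := by rwa [inv_le_iff_one_le_mul₀' hB] at haB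
      have k2 := mul_le_mul_of_nonneg_left k1 (by positivity : 0 ≤ b ^ 2 * γ ^ 2)
      have k3 := mul_le_mul_of_nonneg_left h4 hB.le
      have k4 : 0 ≤ B⁻¹ * (a * γ ^ 2) := by positivity
      linarith
  have e4 : b ^ 2 * γ ^ 2 ≤ a ^ 2 * γ ^ 2 := by gcongr
  have f0 : (1 + c * b) * W' ^ 2 ≤ (1 + c * b) * (W ^ 2 - 2 * α₀ * b * W * i
      + K * (W + 1) * (b ^ 2 * γ ^ 2)) := by gcongr
  have f1 := mul_le_mul_of_nonneg_left e1 (by positivity : 0 ≤ 2 * α₀ * W)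
  have f2 := mul_le_mul_of_nonneg_left e2 (by positivity : 0 ≤ α₀ * W)
  have f3 := mul_le_mul_of_nonneg_left e3 (by positivity : 0 ≤ K * W)
  have f4 := mul_le_mul_of_nonneg_left e4 hK
  have f5 := mul_le_mul_of_nonneg_left hb3 (by positivity : 0 ≤ c * K * (W + 1))
  have f6 : (-(W ^ 2) + κ * W) * D ≤ κ ^ 2 * D :=
    mul_le_mul_of_nonneg_right (by nlinarith [sq_nonneg (W - κ / 2), sq_nonneg κ]) hD0
  have f7 : K / B = K * B⁻¹ := div_eq_mul_inv _ _
  have hb' : b = a - D := by rw [hD]; ring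
  have hQα : α₀ * Q = c - 1 := by rw [hc]; ring
  rw [f7]
  have f8 : α₀ * Q * (W ^ 2 + W) * D + 8 * α₀ * c ^ 2 * W * D + 2 * c * K * (W + 1) * D
      + 2 * B * K * W * D - c * W ^ 2 * D ≤ (κ ^ 2 + 2 * c * K) * D := by
    have e : α₀ * Q * (W ^ 2 + W) * D + 8 * α₀ * c ^ 2 * W * D + 2 * c * K * (W + 1) * D
        + 2 * B * K * W * D - c * W ^ 2 * D
        = (-(W ^ 2) + κ * W) * D + 2 * c * K * D := by rw [hκ, hQα]; ring
    linarith
  linear_combination f0 + f1 + f2 + f3 + f4 + f5 + f8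

/-- One-step inequality for a Lyapunov function controlling the square of the excess of `g` over
a level `Δ`. -/
theorem exists_lyapunov_sq_le (hL : 0 < L) (hg : Differentiable ℝ g) (hnonneg : ∀ x, 0 ≤ g x)
    (hsmooth : ∀ x y, ‖gradient g x - gradient g y‖ ≤ L * ‖x - y‖)
    (hσ₀ : 0 ≤ σ₀) (hσ₁ : 0 ≤ σ₁) (hα₀ : 0 ≤ α₀) {Δ η : ℝ} (hΔ : 0 ≤ Δ) (hη : 0 < η)
    (hlevel : ∀ x δ : E, ‖gradient g x‖ < η → ‖δ‖ ≤ α₀ → g x ≤ Δ ∧ g (x + δ) ≤ Δ) :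
    ∃ K, 0 ≤ K ∧ ∀ B > 0, ∃ c C, 0 ≤ c ∧ 0 ≤ C ∧
      ∀ {G θ : ℕ → E} {S : ℕ → ℝ}, AdaGradNormPath α₀ G θ S → ∀ n,
      (max (g (θ (n + 1)) - Δ) 0) ^ 2 * (1 + c * (√(S (n + 1)))⁻¹) + C * (√(S (n + 1)))⁻¹ ≤
        (max (g (θ n) - Δ) 0) ^ 2 * (1 + c * (√(S n))⁻¹) + C * (√(S n))⁻¹
        - 2 * α₀ * ((√(S n))⁻¹ * max (g (θ n) - Δ) 0) * inner ℝ (gradient g (θ n)) (G n)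
        + (α₀ * ((√(S n))⁻¹ * max (g (θ n) - Δ) 0) * (‖gradient g (θ n)‖ ^ 2 /
            (σ₀ * ‖gradient g (θ n)‖ ^ 2 + σ₁ + 1))
          + K * (normCutoff η (gradient g (θ n)) * (√(S n))⁻¹ ^ 2)
          + K / B * ((√(S n))⁻¹ * max (g (θ n) - Δ) 0)) * ‖G n‖ ^ 2
        + α₀ / 4 * ((√(S n))⁻¹ * max (g (θ n) - Δ) 0) * ‖gradient g (θ n)‖ ^ 2 := by
  obtain ⟨K₀, hK₀, hstep⟩ := sq_posPart_sub_le (α := α₀) hL hg hnonneg hsmooth hΔ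
  obtain ⟨K, hKdef⟩ : ∃ x, x = K₀ * α₀ ^ 2 := ⟨_, rfl⟩
  have hK : 0 ≤ K := by rw [hKdef]; positivity
  refine ⟨K, hK, fun B hB => ?_⟩
  obtain ⟨Q, hQ⟩ : ∃ x, x = 4 * L * σ₀ * (1 + Δ) + σ₁ + 1 := ⟨_, rfl⟩
  have hQ0 : 0 ≤ Q := by rw [hQ]; positivity
  obtain ⟨c, hc⟩ : ∃ x, x = α₀ * Q + 1 := ⟨_, rfl⟩
  have hc0 : 0 ≤ c := by rw [hc]; positivity
  obtain ⟨κ, hκ⟩ : ∃ x, x = α₀ * Q + 8 * α₀ * c ^ 2 + 2 * c * K + 2 * B * K := ⟨_, rfl⟩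
  refine ⟨c, κ ^ 2 + 2 * c * K, hc0, by positivity, fun {G θ S} h n => ?_⟩
  have hs := hstep (θ n) _ (h.norm_step_le n)
  rw [← h.succ_eq n, h.norm_step n, inner_neg_right, inner_smul_right] at hs
  have hlev := fun hv => hlevel (θ n) _ hv (h.norm_step_le n)
  rw [← h.succ_eq n] at hlev
  have hb := h.rate_pos (n + 1)
  have hab := h.rate_succ_le n
  have h4 := h.rate_sq_mul_le n
  have h5 := abs_real_inner_le_norm (gradient g (θ n)) (G n)
  have h6 := norm_gradient_sq_le hL hg hnonneg hsmooth (θ n)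
  have hχ0 := normCutoff_nonneg η (gradient g (θ n))
  have hχ : η ≤ ‖gradient g (θ n)‖ → _ := normCutoff_eq_one hη
  have hv0 := norm_nonneg (gradient g (θ n))
  have hG0 := norm_nonneg (G n)
  generalize normCutoff η (gradient g (θ n)) = χ at *
  generalize (√(S n))⁻¹ = a at *
  generalize (√(S (n + 1)))⁻¹ = b at *
  generalize inner ℝ (gradient g (θ n)) (G n) = i at *
  generalize ‖gradient g (θ n)‖ = v at *
  generalize ‖G n‖ = γ at *
  generalize g (θ n) = y at *
  generalize g (θ (n + 1)) = y' at *
  have ha : 0 < a := hb.trans_le hab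
  rcases lt_or_ge v η with hvη | hvη
  · rw [max_eq_right (sub_nonpos.2 (hlev hvη).1), max_eq_right (sub_nonpos.2 (hlev hvη).2)]
    have k1 : (κ ^ 2 + 2 * c * K) * b ≤ (κ ^ 2 + 2 * c * K) * a := by gcongr
    have k2 : 0 ≤ K * (χ * a ^ 2) * γ ^ 2 := by positivity
    linarith
  rw [hχ hvη]
  have hyW : y ≤ max (y - Δ) 0 + Δ := by linarith [le_max_left (y - Δ) 0]
  have hW : 0 ≤ max (y - Δ) 0 := le_max_right _ _
  generalize max (y - Δ) 0 = W at *
  generalize max (y' - Δ) 0 = W' at *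
  have hq0 : 0 < σ₀ * v ^ 2 + σ₁ + 1 := by positivity
  have hqW : σ₀ * v ^ 2 + σ₁ + 1 ≤ Q * (W + 1) := by
    have k1 : σ₀ * v ^ 2 ≤ σ₀ * (4 * L * (W + Δ)) :=
      mul_le_mul_of_nonneg_left (h6.trans (by gcongr)) hσ₀
    have k2 : 0 ≤ 4 * L * σ₀ * (Δ * W) := by positivity
    have k3 : 0 ≤ σ₁ * W := by positivity
    have k4 : 0 ≤ 4 * L * σ₀ := by positivity
    rw [hQ]
    linarith
  rw [one_mul]
  refine lyapunov_sq_scalar_le hα₀ hK hB hQ0 hc hκ hb hab h4 h5 hq0 hqW hW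
    (hs.trans (le_of_eq ?_))
  rw [hKdef]; ring

end AdaGradNormPath

/-- The AdaGrad-Norm process: each `G n` is, conditionally on `ℱ n`, an unbiased estimator of
`gradient g (θ n)` with affine variance. -/
structure AdaGradNormProcess {E Ω : Type*} [NormedAddCommGroup E] [InnerProductSpace ℝ E]
    [FiniteDimensional ℝ E] {m0 : MeasurableSpace Ω} (P : Measure Ω) (ℱ : Filtration ℕ m0)
    (g : E → ℝ) (σ₀ σ₁ α₀ S₀ : ℝ) (θ₀ : E) (G θ : ℕ → Ω → E) (S : ℕ → Ω → ℝ) : Prop where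
  path : ∀ ω, AdaGradNormPath α₀ (G · ω) (θ · ω) (S · ω)
  θ_zero : ∀ ω, θ 0 ω = θ₀
  S_zero : ∀ ω, S 0 ω = S₀
  continuous_gradient : Continuous (gradient g)
  σ₀_nonneg : 0 ≤ σ₀
  σ₁_nonneg : 0 ≤ σ₁
  measurable_G : ∀ n, StronglyMeasurable[ℱ (n + 1)] (G n)
  measurable_θ : ∀ n, StronglyMeasurable[ℱ n] (θ n)
  integrable_G : ∀ n, Integrable (G n) P
  integrable_sq : ∀ n, Integrable (fun ω => ‖G n ω‖ ^ 2) P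
  unbiased : ∀ n, P[G n | ℱ n] =ᵐ[P] fun ω => gradient g (θ n ω)
  variance : ∀ n, ∀ᵐ ω ∂P,
    (P[fun ω => ‖G n ω‖ ^ 2 | ℱ n]) ω ≤ σ₀ * ‖gradient g (θ n ω)‖ ^ 2 + σ₁

namespace AdaGradNormProcess

variable {E Ω : Type*} [NormedAddCommGroup E] [InnerProductSpace ℝ E]
    [FiniteDimensional ℝ E] {m0 : MeasurableSpace Ω} {P : Measure Ω}
    {ℱ : Filtration ℕ m0} {g : E → ℝ} {σ₀ σ₁ α₀ S₀ : ℝ} {θ₀ : E} {G θ : ℕ → Ω → E}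
    {S : ℕ → Ω → ℝ} (h : AdaGradNormProcess P ℱ g σ₀ σ₁ α₀ S₀ θ₀ G θ S)
include h

theorem measurable_S (n : ℕ) : StronglyMeasurable[ℱ n] (S n) := by
  induction n with
  | zero => rw [funext h.S_zero]; exact stronglyMeasurable_const
  | succ n ih =>
    rw [show S (n + 1) = fun ω => S n ω + ‖G n ω‖ ^ 2 from funext fun ω => (h.path ω).S_succ n]
    exact (ih.mono (ℱ.mono n.le_succ)).add ((h.measurable_G n).norm.pow 2)

theorem measurable_rate (n : ℕ) : StronglyMeasurable[ℱ n] fun ω => (√(S n ω))⁻¹ :=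
  (Real.continuous_sqrt.comp_stronglyMeasurable (h.measurable_S n)).inv₀

theorem stronglyMeasurable {F : Type*} [TopologicalSpace F] {Φ : E × ℝ → F} (hΦ : Continuous Φ)
    (n : ℕ) : StronglyMeasurable[ℱ n] fun ω => Φ (θ n ω, (√(S n ω))⁻¹) :=
  hΦ.comp_stronglyMeasurable ((h.measurable_θ n).prodMk (h.measurable_rate n))

theorem exists_norm_le {F : Type*} [NormedAddCommGroup F] {Φ : E × ℝ → F} (hΦ : Continuous Φ)
    (n : ℕ) : ∃ C, ∀ ω, ‖Φ (θ n ω, (√(S n ω))⁻¹)‖ ≤ C := by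
  have : ProperSpace E := FiniteDimensional.proper ℝ E
  obtain ⟨C, hC⟩ := ((isCompact_closedBall θ₀ (n * α₀)).prod
    (isCompact_Icc (a := 0) (b := (√S₀)⁻¹))).exists_bound_of_continuousOn hΦ.continuousOn
  refine ⟨C, fun ω => hC _ ⟨?_, ((h.path ω).rate_pos n).le, ?_⟩⟩
  · rw [mem_closedBall_iff_norm, ← h.θ_zero ω]
    exact (h.path ω).norm_sub_initial_le n
  · rw [← h.S_zero ω]
    exact (h.path ω).rate_le n

theorem integrable_inner {Φ : E × ℝ → E} (hΦ : Continuous Φ) (n : ℕ) :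
    Integrable (fun ω => inner ℝ (Φ (θ n ω, (√(S n ω))⁻¹)) (G n ω)) P := by
  obtain ⟨C, hC⟩ := h.exists_norm_le hΦ n
  refine ((h.integrable_G n).norm.const_mul C).mono'
    ((((h.stronglyMeasurable hΦ n).mono (ℱ.le n)).inner
      ((h.measurable_G n).mono (ℱ.le _))).aestronglyMeasurable) (ae_of_all _ fun ω => ?_)
  exact (norm_inner_le_norm _ _).trans (mul_le_mul_of_nonneg_right (hC ω) (norm_nonneg _))

theorem condExp_inner {Φ : E × ℝ → E} (hΦ : Continuous Φ) (n : ℕ) :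
    P[fun ω => inner ℝ (Φ (θ n ω, (√(S n ω))⁻¹)) (G n ω) | ℱ n] =ᵐ[P]
      fun ω => inner ℝ (Φ (θ n ω, (√(S n ω))⁻¹)) (gradient g (θ n ω)) := by
  have : CompleteSpace E := FiniteDimensional.complete ℝ E
  have e := condExp_bilin_of_stronglyMeasurable_left (μ := P) (m := ℱ n) (innerSL ℝ (E := E))
    (h.stronglyMeasurable hΦ n) (g := G n) (h.integrable_inner hΦ n) (h.integrable_G n)
  filter_upwards [e, h.unbiased n] with ω h1 h2
  rw [h2] at h1
  exact h1

theorem integrable_mul_sq {Φ : E × ℝ → ℝ} (hΦ : Continuous Φ) (n : ℕ) :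
    Integrable (fun ω => Φ (θ n ω, (√(S n ω))⁻¹) * ‖G n ω‖ ^ 2) P := by
  obtain ⟨C, hC⟩ := h.exists_norm_le hΦ n
  exact (h.integrable_sq n).bdd_mul
    ((h.stronglyMeasurable hΦ n).mono (ℱ.le n)).aestronglyMeasurable (ae_of_all _ hC)

variable [IsProbabilityMeasure P]

theorem integrable {F : Type*} [NormedAddCommGroup F] {Φ : E × ℝ → F} (hΦ : Continuous Φ)
    (n : ℕ) : Integrable (fun ω => Φ (θ n ω, (√(S n ω))⁻¹)) P := by
  obtain ⟨C, hC⟩ := h.exists_norm_le hΦ n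
  exact Integrable.of_bound ((h.stronglyMeasurable hΦ n).mono (ℱ.le n)).aestronglyMeasurable C
    (ae_of_all _ hC)

theorem integral_inner {Φ : E × ℝ → E} (hΦ : Continuous Φ) (n : ℕ) :
    ∫ ω, inner ℝ (Φ (θ n ω, (√(S n ω))⁻¹)) (G n ω) ∂P =
      ∫ ω, inner ℝ (Φ (θ n ω, (√(S n ω))⁻¹)) (gradient g (θ n ω)) ∂P := by
  rw [← integral_condExp (ℱ.le n)]
  exact integral_congr_ae (h.condExp_inner hΦ n)

theorem integral_mul_sq_le {Φ : E × ℝ → ℝ} (hΦ : Continuous Φ) (n : ℕ)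
    (hΦ0 : ∀ x a, 0 < a → 0 ≤ Φ (x, a)) :
    ∫ ω, Φ (θ n ω, (√(S n ω))⁻¹) * ‖G n ω‖ ^ 2 ∂P ≤
      ∫ ω, Φ (θ n ω, (√(S n ω))⁻¹) * (σ₀ * ‖gradient g (θ n ω)‖ ^ 2 + σ₁) ∂P := by
  have hgrad := h.continuous_gradient
  rw [← integral_condExp (ℱ.le n)]
  refine integral_mono_ae integrable_condExp
    (h.integrable (Φ := fun p => Φ p * (σ₀ * ‖gradient g p.1‖ ^ 2 + σ₁)) (by fun_prop) n) ?_
  filter_upwards [h.variance n, condExp_mul_of_stronglyMeasurable_left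
    (h.stronglyMeasurable hΦ n) (h.integrable_mul_sq hΦ n) (h.integrable_sq n)] with ω h1 h2
  refine h2.le.trans ?_
  exact mul_le_mul_of_nonneg_left h1 (hΦ0 _ _ ((h.path ω).rate_pos n))

/-- Integrated form of a one-step Lyapunov inequality. -/
theorem integral_succ_le {Ψ w R T : E × ℝ → ℝ} {H : E × ℝ → E} (hΨ : Continuous Ψ)
    (hw : Continuous w) (hR : Continuous R) (hT : Continuous T) (hH : Continuous H)
    (hw0 : ∀ x a, 0 < a → 0 ≤ w (x, a))
    (hle : ∀ x a, 0 < a → - inner ℝ (H (x, a)) (gradient g x)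
      + w (x, a) * (σ₀ * ‖gradient g x‖ ^ 2 + σ₁) + R (x, a) ≤ T (x, a)) (n : ℕ)
    (hstep : ∀ ω, Ψ (θ (n + 1) ω, (√(S (n + 1) ω))⁻¹) ≤ Ψ (θ n ω, (√(S n ω))⁻¹)
      - inner ℝ (H (θ n ω, (√(S n ω))⁻¹)) (G n ω)
      + w (θ n ω, (√(S n ω))⁻¹) * ‖G n ω‖ ^ 2 + R (θ n ω, (√(S n ω))⁻¹)) :
    ∫ ω, Ψ (θ (n + 1) ω, (√(S (n + 1) ω))⁻¹) ∂P ≤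
      ∫ ω, Ψ (θ n ω, (√(S n ω))⁻¹) ∂P + ∫ ω, T (θ n ω, (√(S n ω))⁻¹) ∂P := by
  have hgrad := h.continuous_gradient
  have i1 := h.integrable hΨ n
  have i2 := h.integrable_inner hH n
  have i3 := h.integrable_mul_sq hw n
  have i4 := h.integrable hR n
  have i5 := h.integrable hT n
  have i6 := h.integrable (Φ := fun p => inner ℝ (H p) (gradient g p.1)) (by fun_prop) n
  have i7 := h.integrable (Φ := fun p => w p * (σ₀ * ‖gradient g p.1‖ ^ 2 + σ₁)) (by fun_prop) n
  have e1 := integral_mono (h.integrable hΨ (n + 1)) (((i1.sub i2).add i3).add i4) hstep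
  have e3 := integral_mono ((i7.sub i6).add i4) i5 fun ω => by
    have := hle (θ n ω) _ ((h.path ω).rate_pos n)
    simp only [Pi.add_apply, Pi.sub_apply]
    linarith
  rw [integral_add' (i7.sub i6) i4, integral_sub' i7 i6] at e3
  rw [integral_add' ((i1.sub i2).add i3) i4, integral_add' (i1.sub i2) i3, integral_sub' i1 i2,
    h.integral_inner hH n] at e1
  have e4 := h.integral_mul_sq_le hw n hw0
  linarith

end AdaGradNormProcess

theorem normCutoff_mul_le {E : Type*} [NormedAddCommGroup E] {σ₀ σ₁ : ℝ} (hσ₀ : 0 ≤ σ₀)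
    (hσ₁ : 0 ≤ σ₁) (η : ℝ) (v : E) :
    normCutoff η v * (σ₀ * ‖v‖ ^ 2 + σ₁) ≤ (σ₀ + σ₁ / η ^ 2) * ‖v‖ ^ 2 := by
  have h1 := mul_le_mul_of_nonneg_right (normCutoff_le_one η v)
    (by positivity : 0 ≤ σ₀ * ‖v‖ ^ 2)
  have h2 := mul_le_mul_of_nonneg_right (normCutoff_le_sq η v) hσ₁
  have h3 : ‖v‖ ^ 2 / η ^ 2 * σ₁ = σ₁ / η ^ 2 * ‖v‖ ^ 2 := by ring
  linarith

namespace AdaGradNormProcess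

variable {E Ω : Type*} [NormedAddCommGroup E] [InnerProductSpace ℝ E]
    [FiniteDimensional ℝ E] {m0 : MeasurableSpace Ω} {P : Measure Ω} [IsProbabilityMeasure P]
    {ℱ : Filtration ℕ m0} {g : E → ℝ} {σ₀ σ₁ α₀ S₀ : ℝ} {θ₀ : E} {G θ : ℕ → Ω → E}
    {S : ℕ → Ω → ℝ} (h : AdaGradNormProcess P ℱ g σ₀ σ₁ α₀ S₀ θ₀ G θ S)
include h

theorem summable_integral_rate_sq {L : ℝ} (hL : 0 < L) (hg : Differentiable ℝ g)
    (hnonneg : ∀ x, 0 ≤ g x)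
    (hsmooth : ∀ x y, ‖gradient g x - gradient g y‖ ≤ L * ‖x - y‖) (hα₀ : 0 < α₀) :
    Summable fun n => ∫ ω, (√(S n ω))⁻¹ ^ 2 * ‖gradient g (θ n ω)‖ ^ 2 ∂P := by
  have : CompleteSpace E := FiniteDimensional.complete ℝ E
  have hgrad := h.continuous_gradient
  have hgc := hg.continuous
  have hσ₀ := h.σ₀_nonneg
  have hσ₁ := h.σ₁_nonneg
  obtain ⟨c, C, hc, hC, hV⟩ := AdaGradNormPath.exists_lyapunov_value_le hL hg hnonneg hsmooth
    hσ₀ hσ₁ hα₀.le (√S₀)⁻¹ (by positivity)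
  have hq : ∀ x, 0 < σ₀ * ‖gradient g x‖ ^ 2 + σ₁ + 1 := fun x => by positivity
  set V : E × ℝ → ℝ := fun p => g p.1 * (p.2 + c * p.2 ^ 2) + C * p.2 with hVdef
  have hVc : Continuous V := by fun_prop
  have key : ∀ n, ∫ ω, V (θ (n + 1) ω, (√(S (n + 1) ω))⁻¹) ∂P ≤
      ∫ ω, V (θ n ω, (√(S n ω))⁻¹) ∂P
        + ∫ ω, -(α₀ / 4) * ((√(S n ω))⁻¹ ^ 2 * ‖gradient g (θ n ω)‖ ^ 2) ∂P := by
    intro n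
    refine h.integral_succ_le (Ψ := V)
      (w := fun p => α₀ / 2 * (p.2 ^ 2 * ‖gradient g p.1‖ ^ 2 /
        (σ₀ * ‖gradient g p.1‖ ^ 2 + σ₁ + 1)))
      (R := fun p => α₀ / 4 * (p.2 ^ 2 * ‖gradient g p.1‖ ^ 2))
      (T := fun p => -(α₀ / 4) * (p.2 ^ 2 * ‖gradient g p.1‖ ^ 2))
      (H := fun p => (α₀ * p.2 ^ 2) • gradient g p.1)
      hVc ?_ (by fun_prop) (by fun_prop) (by fun_prop) ?_ ?_ n ?_
    · exact continuous_const.mul (Continuous.div (by fun_prop) (by fun_prop) fun p => (hq p.1).ne')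
    · intro x a ha
      have := hq x
      positivity
    · intro x a ha
      have hqx := hq x
      rw [real_inner_smul_left, real_inner_self_eq_norm_sq]
      have : a ^ 2 * ‖gradient g x‖ ^ 2 / (σ₀ * ‖gradient g x‖ ^ 2 + σ₁ + 1) *
          (σ₀ * ‖gradient g x‖ ^ 2 + σ₁) ≤ a ^ 2 * ‖gradient g x‖ ^ 2 := by
        rw [div_mul_eq_mul_div, div_le_iff₀ hqx]
        exact mul_le_mul_of_nonneg_left (by linarith) (by positivity)
      have := mul_le_mul_of_nonneg_left this (by positivity : 0 ≤ α₀ / 2)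
      simp only
      linarith
    · intro ω
      have := hV (h.path ω) (by rw [h.S_zero ω]) n
      simp only [hVdef, real_inner_smul_left]
      linarith
  have hbound : ∀ n, α₀ / 4 * ∑ k ∈ Finset.range n,
      ∫ ω, (√(S k ω))⁻¹ ^ 2 * ‖gradient g (θ k ω)‖ ^ 2 ∂P ≤
      ∫ ω, V (θ 0 ω, (√(S 0 ω))⁻¹) ∂P - ∫ ω, V (θ n ω, (√(S n ω))⁻¹) ∂P := by
    intro n
    induction n with
    | zero => simp
    | succ n ih =>
      have := key n
      rw [integral_const_mul] at this
      rw [Finset.sum_range_succ, mul_add]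
      linarith
  refine summable_of_sum_range_le
    (c := (α₀ / 4)⁻¹ * ∫ ω, V (θ 0 ω, (√(S 0 ω))⁻¹) ∂P)
    (fun n => integral_nonneg fun ω => by positivity) fun n => ?_
  rw [← div_eq_inv_mul, le_div_iff₀' (by positivity)]
  refine (hbound n).trans (sub_le_self _ (integral_nonneg fun ω => ?_))
  have := hnonneg (θ n ω)
  have := (h.path ω).rate_pos n
  simp only [hVdef, Pi.zero_apply]
  positivity

theorem exists_integral_sq_le {L : ℝ} (hL : 0 < L) (hg : Differentiable ℝ g)
    (hnonneg : ∀ x, 0 ≤ g x)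
    (hsmooth : ∀ x y, ‖gradient g x - gradient g y‖ ≤ L * ‖x - y‖) (hα₀ : 0 < α₀)
    {η : ℝ} (hη : 0 < η) (hflat : ∀ᶠ x in Bornology.cobounded E, η < ‖gradient g x‖) :
    ∃ C, ∀ n, ∫ ω, g (θ n ω) ^ 2 ∂P ≤ C := by
  have : CompleteSpace E := FiniteDimensional.complete ℝ E
  have hgrad := h.continuous_gradient
  have hgc := hg.continuous
  have hσ₀ := h.σ₀_nonneg
  have hσ₁ := h.σ₁_nonneg
  have hsum := h.summable_integral_rate_sq hL hg hnonneg hsmooth hα₀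
  obtain ⟨Δ, hΔ, hlevel⟩ := exists_level_of_gradient_small hgc hflat α₀
  obtain ⟨K, hK, hK'⟩ := AdaGradNormPath.exists_lyapunov_sq_le hL hg hnonneg hsmooth
    hσ₀ hσ₁ hα₀.le hΔ hη hlevel
  set M := σ₀ + σ₁ / η ^ 2 with hM
  have hM0 : 0 ≤ M := by positivity
  have hvar : ∀ x, η ≤ ‖gradient g x‖ →
      σ₀ * ‖gradient g x‖ ^ 2 + σ₁ ≤ M * ‖gradient g x‖ ^ 2 := by
    intro x hx
    have : σ₁ / η ^ 2 * η ^ 2 ≤ σ₁ / η ^ 2 * ‖gradient g x‖ ^ 2 := by gcongr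
    rw [div_mul_cancel₀ _ (by positivity)] at this
    rw [hM]
    linarith
  have hcut := fun x => normCutoff_mul_le hσ₀ hσ₁ η (gradient g x)
  simp only [← hM] at hcut
  have hBpos : 0 < 2 * K * M / α₀ + 1 := by positivity
  obtain ⟨c, C, hc, hC, hZ⟩ := hK' _ hBpos
  have hKB : K / (2 * K * M / α₀ + 1) * M ≤ α₀ / 2 := by
    rw [div_mul_eq_mul_div, div_le_iff₀ hBpos]
    have : α₀ / 2 * (2 * K * M / α₀ + 1) = K * M + α₀ / 2 := by field_simp
    linarith
  generalize 2 * K * M / α₀ + 1 = B at *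
  have hq : ∀ x, 0 < σ₀ * ‖gradient g x‖ ^ 2 + σ₁ + 1 := fun x => by positivity
  set Z : E × ℝ → ℝ := fun p => (max (g p.1 - Δ) 0) ^ 2 * (1 + c * p.2) + C * p.2 with hZdef
  have hZc : Continuous Z := by fun_prop
  have hcutc : Continuous fun p : E × ℝ => normCutoff η (gradient g p.1) := by
    unfold normCutoff; fun_prop
  have key : ∀ n, ∫ ω, Z (θ (n + 1) ω, (√(S (n + 1) ω))⁻¹) ∂P ≤
      ∫ ω, Z (θ n ω, (√(S n ω))⁻¹) ∂P
        + ∫ ω, K * M * ((√(S n ω))⁻¹ ^ 2 * ‖gradient g (θ n ω)‖ ^ 2) ∂P := by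
    intro n
    refine h.integral_succ_le (Ψ := Z)
      (w := fun p => α₀ * (p.2 * max (g p.1 - Δ) 0) * (‖gradient g p.1‖ ^ 2 /
            (σ₀ * ‖gradient g p.1‖ ^ 2 + σ₁ + 1))
          + K * (normCutoff η (gradient g p.1) * p.2 ^ 2)
          + K / B * (p.2 * max (g p.1 - Δ) 0))
      (R := fun p => α₀ / 4 * (p.2 * max (g p.1 - Δ) 0) * ‖gradient g p.1‖ ^ 2)
      (T := fun p => K * M * (p.2 ^ 2 * ‖gradient g p.1‖ ^ 2))
      (H := fun p => (2 * α₀ * (p.2 * max (g p.1 - Δ) 0)) • gradient g p.1)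
      hZc ?_ (by fun_prop) (by fun_prop) (by fun_prop) ?_ ?_ n ?_
    · have : Continuous fun p : E × ℝ =>
          ‖gradient g p.1‖ ^ 2 / (σ₀ * ‖gradient g p.1‖ ^ 2 + σ₁ + 1) :=
        Continuous.div (by fun_prop) (by fun_prop) fun p => (hq p.1).ne'
      fun_prop
    · intro x a ha
      have := hq x
      have := normCutoff_nonneg η (gradient g x)
      positivity
    · intro x a ha
      have hqx := hq x
      have hcx := mul_le_mul_of_nonneg_left (hcut x) (by positivity : 0 ≤ K * a ^ 2)
      have hfrac : ‖gradient g x‖ ^ 2 / (σ₀ * ‖gradient g x‖ ^ 2 + σ₁ + 1) *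
          (σ₀ * ‖gradient g x‖ ^ 2 + σ₁) ≤ ‖gradient g x‖ ^ 2 := by
        rw [div_mul_eq_mul_div, div_le_iff₀ hqx]
        exact mul_le_mul_of_nonneg_left (by linarith) (by positivity)
      rw [real_inner_smul_left, real_inner_self_eq_norm_sq]
      simp only
      rcases lt_or_ge ‖gradient g x‖ η with hx | hx
      · rw [max_eq_right (sub_nonpos.2 (hlevel x 0 hx (by simpa using hα₀.le)).1)]
        linarith
      have hvx := hvar x hx
      have hW : 0 ≤ max (g x - Δ) 0 := le_max_right _ _
      generalize max (g x - Δ) 0 = W at *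
      have f1 := mul_le_mul_of_nonneg_left hfrac (by positivity : 0 ≤ α₀ * (a * W))
      have f2 := mul_le_mul_of_nonneg_left hvx (by positivity : 0 ≤ K / B * (a * W))
      have f3 := mul_le_mul_of_nonneg_right hKB
        (by positivity : 0 ≤ a * W * ‖gradient g x‖ ^ 2)
      have f4 : 0 ≤ α₀ * (a * W * ‖gradient g x‖ ^ 2) := by positivity
      linarith
    · intro ω
      have := hZ (h.path ω) n
      simp only [hZdef, real_inner_smul_left]
      linarith
  have hbound : ∀ n, ∫ ω, Z (θ n ω, (√(S n ω))⁻¹) ∂P ≤ ∫ ω, Z (θ 0 ω, (√(S 0 ω))⁻¹) ∂P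
      + K * M * ∑' k, ∫ ω, (√(S k ω))⁻¹ ^ 2 * ‖gradient g (θ k ω)‖ ^ 2 ∂P := by
    intro n
    have hn : ∫ ω, Z (θ n ω, (√(S n ω))⁻¹) ∂P ≤ ∫ ω, Z (θ 0 ω, (√(S 0 ω))⁻¹) ∂P
        + K * M * ∑ k ∈ Finset.range n,
          ∫ ω, (√(S k ω))⁻¹ ^ 2 * ‖gradient g (θ k ω)‖ ^ 2 ∂P := by
      induction n with
      | zero => simp
      | succ n ih =>
        have := key n
        rw [integral_const_mul] at this
        rw [Finset.sum_range_succ, mul_add]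
        linarith
    refine hn.trans (add_le_add_right (mul_le_mul_of_nonneg_left
      (hsum.sum_le_tsum _ fun k _ => integral_nonneg fun ω => by positivity) (by positivity)) _)
  refine ⟨2 * (∫ ω, Z (θ 0 ω, (√(S 0 ω))⁻¹) ∂P
      + K * M * ∑' k, ∫ ω, (√(S k ω))⁻¹ ^ 2 * ‖gradient g (θ k ω)‖ ^ 2 ∂P) + 2 * Δ ^ 2,
    fun n => ?_⟩
  have e : ∫ ω, g (θ n ω) ^ 2 ∂P ≤ ∫ ω, (2 * Z (θ n ω, (√(S n ω))⁻¹) + 2 * Δ ^ 2) ∂P := by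
    refine integral_mono (h.integrable (Φ := fun p => g p.1 ^ 2) (by fun_prop) n)
      (h.integrable (Φ := fun p => 2 * Z p + 2 * Δ ^ 2) (by fun_prop) n) fun ω => ?_
    have ha := (h.path ω).rate_pos n
    have h0 := hnonneg (θ n ω)
    have hW : g (θ n ω) ≤ max (g (θ n ω) - Δ) 0 + Δ := by
      linarith [le_max_left (g (θ n ω) - Δ) 0]
    have hW0 : 0 ≤ max (g (θ n ω) - Δ) 0 := le_max_right _ _
    simp only [hZdef]
    generalize max (g (θ n ω) - Δ) 0 = W at *
    have f1 : 0 ≤ W ^ 2 * (c * (√(S n ω))⁻¹) := by positivity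
    have f2 : 0 ≤ C * (√(S n ω))⁻¹ := by positivity
    have f3 : g (θ n ω) ^ 2 ≤ (W + Δ) ^ 2 := by gcongr
    linarith [sq_nonneg (W - Δ)]
  rw [integral_add ((h.integrable hZc n).const_mul 2) (integrable_const _), integral_const_mul,
    integral_const, probReal_univ, one_smul] at e
  linarith [hbound n]

end AdaGradNormProcess

theorem ae_summable_of_summable_integral {Ω : Type*} {m0 : MeasurableSpace Ω} {μ : Measure Ω}
    {f : ℕ → Ω → ℝ} (hf : ∀ n ω, 0 ≤ f n ω) (hfi : ∀ n, Integrable (f n) μ)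
    (hsum : Summable fun n => ∫ ω, f n ω ∂μ) : ∀ᵐ ω ∂μ, Summable fun n => f n ω := by
  have h1 : ∫⁻ ω, ∑' n, ENNReal.ofReal (f n ω) ∂μ ≠ ⊤ := by
    rw [lintegral_tsum fun n => (hfi n).aestronglyMeasurable.aemeasurable.ennreal_ofReal]
    simp_rw [← ofReal_integral_eq_lintegral_ofReal (hfi _) (ae_of_all _ (hf _))]
    exact hsum.tsum_ofReal_ne_top
  filter_upwards [ae_lt_top' (AEMeasurable.tsum fun n =>
    (hfi n).aestronglyMeasurable.aemeasurable.ennreal_ofReal) h1] with ω hω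
  refine (ENNReal.summable_toReal hω.ne).congr fun n => ENNReal.toReal_ofReal (hf n ω)

/-- Sums of orthogonal martingale increments with summable second moments converge almost
surely. -/
theorem ae_tendsto_sum_of_condExp_eq_zero {Ω : Type*} {m0 : MeasurableSpace Ω} {μ : Measure Ω}
    [IsProbabilityMeasure μ] {ℱ : Filtration ℕ m0} {ξ : ℕ → Ω → ℝ}
    (hmeas : ∀ n, StronglyMeasurable[ℱ (n + 1)] (ξ n)) (hL2 : ∀ n, MemLp (ξ n) 2 μ)
    (hcond : ∀ n, μ[ξ n | ℱ n] =ᵐ[μ] 0) (hsum : Summable fun n => ∫ ω, ξ n ω ^ 2 ∂μ) :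
    ∀ᵐ ω ∂μ, ∃ l, Tendsto (fun n => ∑ k ∈ Finset.range n, ξ k ω) atTop (𝓝 l) := by
  set M : ℕ → Ω → ℝ := fun n ω => ∑ k ∈ Finset.range n, ξ k ω with hM
  have hMmeas : ∀ n, StronglyMeasurable[ℱ n] (M n) := fun n =>
    Finset.stronglyMeasurable_fun_sum _ fun k hk =>
      (hmeas k).mono (ℱ.mono (Finset.mem_range.1 hk))
  have hML2 : ∀ n, MemLp (M n) 2 μ := fun n => memLp_finsetSum _ fun k _ => hL2 k
  have hMint : ∀ n, Integrable (M n) μ := fun n => (hML2 n).integrable one_le_two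
  have hsucc : ∀ n, M (n + 1) = M n + ξ n := fun n => funext fun ω => Finset.sum_range_succ _ _
  have hmart : Martingale M ℱ μ := martingale_of_condExp_sub_eq_zero_nat hMmeas hMint fun n => by
    rw [hsucc, add_sub_cancel_left]
    exact hcond n
  have horth : ∀ n, ∫ ω, M n ω * ξ n ω ∂μ = 0 := by
    intro n
    have hi : Integrable (M n * ξ n) μ := (hML2 n).integrable_mul (hL2 n)
    have e : ∫ ω, (μ[M n * ξ n | ℱ n]) ω ∂μ = ∫ ω, M n ω * ξ n ω ∂μ := integral_condExp (ℱ.le n)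
    rw [← e]
    refine integral_eq_zero_of_ae ?_
    filter_upwards [condExp_mul_of_stronglyMeasurable_left (hMmeas n) hi
      ((hL2 n).integrable one_le_two), hcond n] with ω h1 h2
    rw [h1, Pi.mul_apply, h2, Pi.zero_apply, mul_zero]
  have hsq : ∀ n, ∫ ω, M n ω ^ 2 ∂μ = ∑ k ∈ Finset.range n, ∫ ω, ξ k ω ^ 2 ∂μ := by
    intro n
    induction n with
    | zero => simp [hM]
    | succ n ih =>
      have hi : Integrable (fun ω => M n ω * ξ n ω) μ := (hML2 n).integrable_mul (hL2 n)
      rw [Finset.sum_range_succ, ← ih, hsucc]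
      have e : ∀ ω, (M n + ξ n) ω ^ 2 = M n ω ^ 2 + 2 * (M n ω * ξ n ω) + ξ n ω ^ 2 := fun ω => by
        rw [Pi.add_apply]; ring
      simp_rw [e]
      have i12 : Integrable (fun ω => M n ω ^ 2 + 2 * (M n ω * ξ n ω)) μ :=
        (hML2 n).integrable_sq.add (hi.const_mul 2)
      rw [integral_add i12 (hL2 n).integrable_sq,
        integral_add (hML2 n).integrable_sq (hi.const_mul 2), integral_const_mul, horth, mul_zero,
        add_zero]
  refine hmart.submartingale.exists_ae_tendsto_of_bdd
    (R := (1 + ∑' k, ∫ ω, ξ k ω ^ 2 ∂μ).toNNReal) fun n => ?_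
  rw [eLpNorm_one_eq_lintegral_enorm, ← ofReal_integral_norm_eq_lintegral_enorm (hMint n)]
  refine ENNReal.ofReal_le_ofReal ?_
  calc ∫ ω, ‖M n ω‖ ∂μ ≤ ∫ ω, (1 + M n ω ^ 2) ∂μ := by
        refine integral_mono (hMint n).norm ((integrable_const 1).add (hML2 n).integrable_sq)
          fun ω => ?_
        simp only [Real.norm_eq_abs]
        nlinarith [sq_abs (M n ω), sq_nonneg (|M n ω| - 1)]
    _ = 1 + ∑ k ∈ Finset.range n, ∫ ω, ξ k ω ^ 2 ∂μ := by
        rw [integral_add (integrable_const 1) (hML2 n).integrable_sq, hsq, integral_const,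
          probReal_univ, one_smul]
    _ ≤ _ := add_le_add_right
        (hsum.sum_le_tsum _ fun k _ => integral_nonneg fun ω => sq_nonneg _) _

namespace AdaGradNormProcess

variable {E Ω : Type*} [NormedAddCommGroup E] [InnerProductSpace ℝ E]
    [FiniteDimensional ℝ E] {m0 : MeasurableSpace Ω} {P : Measure Ω} [IsProbabilityMeasure P]
    {ℱ : Filtration ℕ m0} {g : E → ℝ} {σ₀ σ₁ α₀ S₀ : ℝ} {θ₀ : E} {G θ : ℕ → Ω → E}
    {S : ℕ → Ω → ℝ} (h : AdaGradNormProcess P ℱ g σ₀ σ₁ α₀ S₀ θ₀ G θ S)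
include h

theorem ae_tendsto_sum_inner
    (hsum : Summable fun n => ∫ ω, (√(S n ω))⁻¹ ^ 2 * ‖gradient g (θ n ω)‖ ^ 2 ∂P)
    {H : E → E} (hH : Continuous H) {C : ℝ} (hC : ∀ x, ‖H x‖ ≤ C)
    (hC' : ∀ x, ‖H x‖ ≤ C * ‖gradient g x‖) :
    ∀ᵐ ω ∂P, ∃ l, Tendsto (fun n => ∑ k ∈ Finset.range n,
      (√(S k ω))⁻¹ * inner ℝ (H (θ k ω)) (G k ω - gradient g (θ k ω))) atTop (𝓝 l) := by
  have hgrad := h.continuous_gradient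
  have hΦ : Continuous fun p : E × ℝ => p.2 • H p.1 := by fun_prop
  have hΨ : Continuous fun p : E × ℝ => inner ℝ (p.2 • H p.1) (gradient g p.1) := by fun_prop
  have e : ∀ n, (fun ω => (√(S n ω))⁻¹ * inner ℝ (H (θ n ω)) (G n ω - gradient g (θ n ω))) =
      (fun ω => inner ℝ ((√(S n ω))⁻¹ • H (θ n ω)) (G n ω))
        - fun ω => inner ℝ ((√(S n ω))⁻¹ • H (θ n ω)) (gradient g (θ n ω)) := by
    intro n
    ext ω
    rw [Pi.sub_apply, ← inner_sub_right, real_inner_smul_left]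
  refine ae_tendsto_sum_of_condExp_eq_zero (ℱ := ℱ)
    (ξ := fun n ω => (√(S n ω))⁻¹ * inner ℝ (H (θ n ω)) (G n ω - gradient g (θ n ω)))
    (fun n => ?_) (fun n => ?_) (fun n => ?_) ?_
  · rw [e]
    exact (((h.stronglyMeasurable hΦ n).mono (ℱ.mono n.le_succ)).inner (h.measurable_G n)).sub
      ((h.stronglyMeasurable hΨ n).mono (ℱ.mono n.le_succ))
  · rw [e]
    refine MemLp.sub ?_ ?_
    · obtain ⟨B, hB⟩ := h.exists_norm_le hΦ n
      refine MemLp.of_le_mul (c := B) (g := G n) ((memLp_two_iff_integrable_sq_norm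
        (h.integrable_G n).aestronglyMeasurable).2 (h.integrable_sq n))
        (h.integrable_inner hΦ n).aestronglyMeasurable (ae_of_all _ fun ω => ?_)
      exact (norm_inner_le_norm _ _).trans
        (mul_le_mul_of_nonneg_right (hB ω) (norm_nonneg _))
    · obtain ⟨B, hB⟩ := h.exists_norm_le hΨ n
      exact MemLp.of_bound (h.integrable hΨ n).aestronglyMeasurable B (ae_of_all _ hB)
  · rw [e]
    filter_upwards [condExp_sub (h.integrable_inner hΦ n) (h.integrable hΨ n) (ℱ n),
      h.condExp_inner hΦ n] with ω h1 h2
    rw [h1, Pi.sub_apply, h2, condExp_of_stronglyMeasurable (ℱ.le n) (h.stronglyMeasurable hΨ n)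
      (h.integrable hΨ n), sub_self, Pi.zero_apply]
  · refine Summable.of_nonneg_of_le (fun n => integral_nonneg fun ω => sq_nonneg _) (fun n => ?_)
      (hsum.mul_left (2 * C ^ 2 * (σ₀ + σ₁ + 1)))
    have hσ₀ := h.σ₀_nonneg
    have hσ₁ := h.σ₁_nonneg
    have hw : Continuous fun p : E × ℝ => 2 * p.2 ^ 2 * ‖H p.1‖ ^ 2 := by fun_prop
    have hR : Continuous fun p : E × ℝ => 2 * p.2 ^ 2 * ‖H p.1‖ ^ 2 * ‖gradient g p.1‖ ^ 2 := by
      fun_prop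
    have i1 := h.integrable_mul_sq hw n
    have i2 := h.integrable hR n
    have i3 := h.integrable (Φ := fun p => 2 * p.2 ^ 2 * ‖H p.1‖ ^ 2 *
      (σ₀ * ‖gradient g p.1‖ ^ 2 + σ₁)) (by fun_prop) n
    calc ∫ ω, ((√(S n ω))⁻¹ * inner ℝ (H (θ n ω)) (G n ω - gradient g (θ n ω))) ^ 2 ∂P
        ≤ ∫ ω, (2 * (√(S n ω))⁻¹ ^ 2 * ‖H (θ n ω)‖ ^ 2 * ‖G n ω‖ ^ 2
          + 2 * (√(S n ω))⁻¹ ^ 2 * ‖H (θ n ω)‖ ^ 2 * ‖gradient g (θ n ω)‖ ^ 2) ∂P := by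
          refine integral_mono_of_nonneg (ae_of_all _ fun ω => sq_nonneg _) (i1.add i2)
            (ae_of_all _ fun ω => ?_)
          have k1 : (inner ℝ (H (θ n ω)) (G n ω - gradient g (θ n ω))) ^ 2 ≤
              ‖H (θ n ω)‖ ^ 2 * ‖G n ω - gradient g (θ n ω)‖ ^ 2 := by
            rw [← mul_pow, ← sq_abs (inner ℝ _ _)]
            gcongr
            exact abs_real_inner_le_norm _ _
          have k2 : ‖G n ω - gradient g (θ n ω)‖ ^ 2 ≤
              2 * ‖G n ω‖ ^ 2 + 2 * ‖gradient g (θ n ω)‖ ^ 2 := by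
            have : ‖G n ω - gradient g (θ n ω)‖ ^ 2 ≤ (‖G n ω‖ + ‖gradient g (θ n ω)‖) ^ 2 := by
              gcongr; exact norm_sub_le _ _
            linarith [sq_nonneg (‖G n ω‖ - ‖gradient g (θ n ω)‖)]
          have k3 := k1.trans (mul_le_mul_of_nonneg_left k2 (sq_nonneg _))
          have k4 := mul_le_mul_of_nonneg_left k3 (sq_nonneg (√(S n ω))⁻¹)
          simp only [mul_pow]
          linarith
      _ ≤ ∫ ω, 2 * (√(S n ω))⁻¹ ^ 2 * ‖H (θ n ω)‖ ^ 2 * (σ₀ * ‖gradient g (θ n ω)‖ ^ 2 + σ₁) ∂P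
          + ∫ ω, 2 * (√(S n ω))⁻¹ ^ 2 * ‖H (θ n ω)‖ ^ 2 * ‖gradient g (θ n ω)‖ ^ 2 ∂P := by
          rw [integral_add i1 i2]
          refine add_le_add_left (h.integral_mul_sq_le hw n fun x a _ => ?_) _
          positivity
      _ = ∫ ω, (2 * (√(S n ω))⁻¹ ^ 2 * ‖H (θ n ω)‖ ^ 2 * (σ₀ * ‖gradient g (θ n ω)‖ ^ 2 + σ₁)
          + 2 * (√(S n ω))⁻¹ ^ 2 * ‖H (θ n ω)‖ ^ 2 * ‖gradient g (θ n ω)‖ ^ 2) ∂P :=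
          (integral_add i3 i2).symm
      _ ≤ ∫ ω, 2 * C ^ 2 * (σ₀ + σ₁ + 1) *
          ((√(S n ω))⁻¹ ^ 2 * ‖gradient g (θ n ω)‖ ^ 2) ∂P := by
          refine integral_mono (i3.add i2) (h.integrable (Φ := fun p =>
            2 * C ^ 2 * (σ₀ + σ₁ + 1) * (p.2 ^ 2 * ‖gradient g p.1‖ ^ 2)) (by fun_prop) n)
            fun ω => ?_
          have k1 : ‖H (θ n ω)‖ ^ 2 ≤ C ^ 2 := by gcongr; exact hC _
          have k2 : ‖H (θ n ω)‖ ^ 2 ≤ C ^ 2 * ‖gradient g (θ n ω)‖ ^ 2 := by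
            rw [← mul_pow]; gcongr; exact hC' _
          have k3 := mul_le_mul_of_nonneg_right k1
            (by positivity : 0 ≤ (√(S n ω))⁻¹ ^ 2 * ((σ₀ + 1) * ‖gradient g (θ n ω)‖ ^ 2))
          have k4 := mul_le_mul_of_nonneg_right k2
            (by positivity : 0 ≤ (√(S n ω))⁻¹ ^ 2 * σ₁)
          simp only
          linarith
      _ = _ := integral_const_mul _ _

end AdaGradNormProcess

theorem ae_frequently_le_of_integral_le {Ω : Type*} {m0 : MeasurableSpace Ω} {μ : Measure Ω}
    {f : ℕ → Ω → ℝ} (hf : ∀ n ω, 0 ≤ f n ω) (hmeas : ∀ n, Measurable (f n))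
    (hfi : ∀ n, Integrable (f n) μ) {C : ℝ} (hC : ∀ n, ∫ ω, f n ω ∂μ ≤ C) :
    ∀ᵐ ω ∂μ, ∃ N, ∃ᶠ n in atTop, f n ω ≤ N := by
  have hmeas' : ∀ n, Measurable fun ω => ENNReal.ofReal (f n ω) := fun n =>
    (hmeas n).ennreal_ofReal
  have h1 : ∫⁻ ω, liminf (fun n => ENNReal.ofReal (f n ω)) atTop ∂μ ≠ ⊤ := by
    refine ne_top_of_le_ne_top (b := ENNReal.ofReal C) ENNReal.ofReal_ne_top
      ((lintegral_liminf_le hmeas').trans ?_)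
    refine liminf_le_of_le (by isBoundedDefault) fun b hb => ?_
    obtain ⟨n, hn⟩ := hb.exists
    refine hn.trans ?_
    rw [← ofReal_integral_eq_lintegral_ofReal (hfi n) (ae_of_all _ (hf n))]
    exact ENNReal.ofReal_le_ofReal (hC n)
  filter_upwards [ae_lt_top (Measurable.liminf hmeas') h1] with ω hω
  obtain ⟨r, hr, -⟩ := ENNReal.lt_iff_exists_nnreal_btwn.1 hω
  refine ⟨r, (frequently_lt_of_liminf_lt (by isBoundedDefault) hr).mono fun n hn => ?_⟩
  exact (ENNReal.ofReal_le_iff_le_toReal ENNReal.coe_ne_top).1 hn.le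

theorem tendsto_integral_zero_of_integral_sq_le {Ω : Type*} {m0 : MeasurableSpace Ω}
    {μ : Measure Ω} [IsFiniteMeasure μ] {f : ℕ → Ω → ℝ} (hf : ∀ n ω, 0 ≤ f n ω)
    (hfi : ∀ n, Integrable (f n) μ) (hfi' : ∀ n, Integrable (fun ω => f n ω ^ 2) μ) {C : ℝ}
    (hC : ∀ n, ∫ ω, f n ω ^ 2 ∂μ ≤ C)
    (hlim : ∀ᵐ ω ∂μ, Tendsto (fun n => f n ω) atTop (𝓝 0)) :
    Tendsto (fun n => ∫ ω, f n ω ∂μ) atTop (𝓝 0) := by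
  have hC0 : 0 ≤ C := (integral_nonneg fun ω => sq_nonneg _).trans (hC 0)
  have hmin : ∀ K : ℝ, 0 < K → Tendsto (fun n => ∫ ω, min (f n ω) K ∂μ) atTop (𝓝 0) := by
    intro K hK
    have := tendsto_integral_of_dominated_convergence (μ := μ) (F := fun n ω => min (f n ω) K)
      (f := fun _ => 0) (fun _ => K)
      (fun n => (hfi n).aestronglyMeasurable.inf aestronglyMeasurable_const)
      (integrable_const K) (fun n => ae_of_all _ fun ω => ?_) ?_
    · simpa using this
    · rw [Real.norm_of_nonneg (le_min (hf n ω) hK.le)]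
      exact min_le_right _ _
    · filter_upwards [hlim] with ω hω
      simpa [hK.le] using hω.min (tendsto_const_nhds (x := K))
  refine Metric.tendsto_atTop.2 fun ε hε => ?_
  set K := 2 * (C + 1) / ε with hKdef
  have hK : 0 < K := by positivity
  obtain ⟨N, hN⟩ := Metric.tendsto_atTop.1 (hmin K hK) (ε / 2) (half_pos hε)
  refine ⟨N, fun n hn => ?_⟩
  have h1 := hN n hn
  rw [Real.dist_0_eq_abs] at h1 ⊢
  rw [abs_of_nonneg (integral_nonneg (hf n))]
  have hmi : Integrable (fun ω => min (f n ω) K) μ := (hfi n).inf (integrable_const K)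
  have h2 : ∫ ω, f n ω ∂μ ≤ ∫ ω, (min (f n ω) K + f n ω ^ 2 * K⁻¹) ∂μ := by
    refine integral_mono (hfi n) (hmi.add ((hfi' n).mul_const _)) fun ω => ?_
    have h0 := hf n ω
    rcases le_total (f n ω) K with h | h
    · simp only [min_eq_left h]
      exact le_add_of_nonneg_right (by positivity)
    · simp only [min_eq_right h]
      rw [← div_eq_mul_inv]
      refine le_add_of_nonneg_of_le hK.le ((le_div_iff₀ hK).2 ?_)
      rw [sq]
      gcongr
  rw [integral_add hmi ((hfi' n).mul_const _), integral_mul_const] at h2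
  have h3 : (∫ ω, f n ω ^ 2 ∂μ) * K⁻¹ ≤ C * K⁻¹ := by gcongr; exact hC n
  have h4 : C * K⁻¹ < ε / 2 := by
    rw [← div_eq_mul_inv, div_lt_iff₀ hK, hKdef]
    have : ε / 2 * (2 * (C + 1) / ε) = C + 1 := by field_simp
    linarith
  linarith [le_abs_self (∫ ω, min (f n ω) K ∂μ)]

namespace AdaGradNormProcess

variable {E Ω : Type*} [NormedAddCommGroup E] [InnerProductSpace ℝ E]
    [FiniteDimensional ℝ E] {m0 : MeasurableSpace Ω} {P : Measure Ω} [IsProbabilityMeasure P]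
    {ℱ : Filtration ℕ m0} {g : E → ℝ} {σ₀ σ₁ α₀ S₀ : ℝ} {θ₀ : E} {G θ : ℕ → Ω → E}
    {S : ℕ → Ω → ℝ} (h : AdaGradNormProcess P ℱ g σ₀ σ₁ α₀ S₀ θ₀ G θ S)
include h

theorem ae_summable_cutoff_sq
    (hsum : Summable fun n => ∫ ω, (√(S n ω))⁻¹ ^ 2 * ‖gradient g (θ n ω)‖ ^ 2 ∂P) (η : ℝ) :
    ∀ᵐ ω ∂P, Summable fun n =>
      normCutoff η (gradient g (θ n ω)) * ((√(S n ω))⁻¹ ^ 2 * ‖G n ω‖ ^ 2) := by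
  have hgrad := h.continuous_gradient
  have hσ₀ := h.σ₀_nonneg
  have hσ₁ := h.σ₁_nonneg
  have hΦ : Continuous fun p : E × ℝ => normCutoff η (gradient g p.1) * p.2 ^ 2 := by
    unfold normCutoff; fun_prop
  have hfi := h.integrable_mul_sq hΦ
  simp only [mul_assoc] at hfi
  refine ae_summable_of_summable_integral (fun n ω => ?_) hfi ?_
  · have := normCutoff_nonneg η (gradient g (θ n ω))
    positivity
  refine Summable.of_nonneg_of_le (fun n => integral_nonneg fun ω => ?_) (fun n => ?_)
    (hsum.mul_left (σ₀ + σ₁ / η ^ 2))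
  · have := normCutoff_nonneg η (gradient g (θ n ω))
    simp only [Pi.zero_apply]
    positivity
  have h1 := h.integral_mul_sq_le hΦ n fun x a _ =>
    mul_nonneg (normCutoff_nonneg _ _) (sq_nonneg a)
  simp only [mul_assoc] at h1
  refine h1.trans ?_
  rw [← integral_const_mul]
  refine integral_mono (h.integrable (Φ := fun p => normCutoff η (gradient g p.1) * (p.2 ^ 2 *
    (σ₀ * ‖gradient g p.1‖ ^ 2 + σ₁))) ?_ n) (h.integrable (Φ := fun p => (σ₀ + σ₁ / η ^ 2) *
    (p.2 ^ 2 * ‖gradient g p.1‖ ^ 2)) (by fun_prop) n) fun ω => ?_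
  · simp only [← mul_assoc]
    fun_prop
  · have := mul_le_mul_of_nonneg_left (normCutoff_mul_le hσ₀ hσ₁ η (gradient g (θ n ω)))
      (sq_nonneg (√(S n ω))⁻¹)
    simp only
    linarith

theorem ae_tendsto_sum_cutoff_smul
    (hsum : Summable fun n => ∫ ω, (√(S n ω))⁻¹ ^ 2 * ‖gradient g (θ n ω)‖ ^ 2 ∂P)
    {η : ℝ} (hη : 0 < η) :
    ∀ᵐ ω ∂P, ∃ l, Tendsto (fun n => ∑ k ∈ Finset.range n,
      (normCutoff η (gradient g (θ k ω)) * (√(S k ω))⁻¹) • (G k ω - gradient g (θ k ω)))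
      atTop (𝓝 l) := by
  have hgrad := h.continuous_gradient
  set b := stdOrthonormalBasis ℝ E
  have hb : ∀ᵐ ω ∂P, ∀ i, ∃ l, Tendsto (fun n => ∑ k ∈ Finset.range n, (√(S k ω))⁻¹ *
      inner ℝ (normCutoff η (gradient g (θ k ω)) • b i) (G k ω - gradient g (θ k ω)))
      atTop (𝓝 l) := by
    refine ae_all_iff.2 fun i => h.ae_tendsto_sum_inner hsum (C := 1 + η⁻¹)
      (H := fun x => normCutoff η (gradient g x) • b i) ?_ (fun x => ?_) fun x => ?_
    · unfold normCutoff; fun_prop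
    · rw [norm_smul, b.norm_eq_one, mul_one, Real.norm_of_nonneg (normCutoff_nonneg _ _)]
      exact (normCutoff_le_one _ _).trans (le_add_of_nonneg_right (by positivity))
    · rw [norm_smul, b.norm_eq_one, mul_one, Real.norm_of_nonneg (normCutoff_nonneg _ _)]
      refine (normCutoff_le hη _).trans ?_
      rw [div_eq_inv_mul]
      gcongr
      exact le_add_of_nonneg_left zero_le_one
  filter_upwards [hb] with ω hω
  choose l hl using hω
  refine ⟨∑ i, l i • b i, (tendsto_finsetSum Finset.univ fun i _ =>
    (hl i).smul_const (b i)).congr fun n => ?_⟩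
  simp_rw [Finset.sum_smul]
  rw [Finset.sum_comm]
  refine Finset.sum_congr rfl fun k _ => ?_
  rw [← b.sum_repr' ((normCutoff η (gradient g (θ k ω)) * (√(S k ω))⁻¹) •
    (G k ω - gradient g (θ k ω)))]
  refine Finset.sum_congr rfl fun i _ => ?_
  rw [real_inner_smul_left, inner_smul_right]
  congr 1
  ring

theorem ae_tendsto_sum_levelCutoff {L : ℝ} (hL : 0 < L) (hg : Differentiable ℝ g)
    (hnonneg : ∀ x, 0 ≤ g x)
    (hsmooth : ∀ x y, ‖gradient g x - gradient g y‖ ≤ L * ‖x - y‖)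
    (hsum : Summable fun n => ∫ ω, (√(S n ω))⁻¹ ^ 2 * ‖gradient g (θ n ω)‖ ^ 2 ∂P)
    {N : ℝ} (hN : 0 ≤ N) :
    ∀ᵐ ω ∂P, ∃ l, Tendsto (fun n => ∑ k ∈ Finset.range n,
      (√(S k ω))⁻¹ * (levelCutoff N (g (θ k ω)) *
        inner ℝ (gradient g (θ k ω)) (G k ω - gradient g (θ k ω)))) atTop (𝓝 l) := by
  have : CompleteSpace E := FiniteDimensional.complete ℝ E
  have hgrad := h.continuous_gradient
  have hgc := hg.continuous
  have hle : ∀ x, ‖levelCutoff N (g x) • gradient g x‖ ≤ ‖gradient g x‖ := fun x => by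
    rw [norm_smul, Real.norm_of_nonneg (levelCutoff_nonneg _ _)]
    exact mul_le_of_le_one_left (norm_nonneg _) (levelCutoff_le_one _ _)
  have key := h.ae_tendsto_sum_inner hsum (H := fun x => levelCutoff N (g x) • gradient g x)
    (C := 1 + √(4 * L * (N + 1))) (by unfold levelCutoff; fun_prop) (fun x => ?_) fun x => ?_
  · simpa only [real_inner_smul_left] using key
  · rcases le_total (N + 1) (g x) with hx | hx
    · rw [levelCutoff_eq_zero hx, zero_smul, norm_zero]
      positivity
    · refine (hle x).trans (le_add_of_nonneg_of_le zero_le_one (Real.le_sqrt_of_sq_le ?_))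
      refine (norm_gradient_sq_le hL hg hnonneg hsmooth x).trans ?_
      gcongr
  · exact (hle x).trans (le_mul_of_one_le_left (norm_nonneg _)
      (le_add_of_nonneg_right (Real.sqrt_nonneg _)))

theorem tendsto_integral_gradient_sq {L : ℝ} (hL : 0 < L) (hg : Differentiable ℝ g)
    (hnonneg : ∀ x, 0 ≤ g x)
    (hsmooth : ∀ x y, ‖gradient g x - gradient g y‖ ≤ L * ‖x - y‖) (hα₀ : 0 < α₀)
    {η : ℝ} (hη : 0 < η) (hflat : ∀ᶠ x in Bornology.cobounded E, η < ‖gradient g x‖)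
    (hcoer : Tendsto g (Bornology.cobounded E) atTop)
    (hsard : interior (closure {y : ℝ | ∃ x : E, gradient g x = 0 ∧ g x = y}) = ∅)
    {δ₀ δ₁ : ℝ} (hδ₀ : 0 < δ₀) (hδ₁ : 0 < δ₁)
    (hsharp : ∀ᵐ ω ∂P, ∀ n, ‖gradient g (θ n ω)‖ ≤ δ₀ → ‖G n ω‖ ≤ δ₁) :
    Tendsto (fun n => ∫ ω, ‖gradient g (θ n ω)‖ ^ 2 ∂P) atTop (𝓝 0) := by
  have : CompleteSpace E := FiniteDimensional.complete ℝ E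
  have hgrad := h.continuous_gradient
  have hgc := hg.continuous
  have hsum := h.summable_integral_rate_sq hL hg hnonneg hsmooth hα₀
  obtain ⟨C, hC⟩ := h.exists_integral_sq_le hL hg hnonneg hsmooth hα₀ hη hflat
  have hgi : ∀ n, Integrable (fun ω => g (θ n ω) ^ 2) P :=
    h.integrable (Φ := fun p => g p.1 ^ 2) (by fun_prop)
  refine tendsto_integral_zero_of_integral_sq_le (C := (4 * L) ^ 2 * C)
    (fun n ω => sq_nonneg _) (h.integrable (Φ := fun p => ‖gradient g p.1‖ ^ 2) (by fun_prop))
    (h.integrable (Φ := fun p => (‖gradient g p.1‖ ^ 2) ^ 2) (by fun_prop)) (fun n => ?_) ?_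
  · calc ∫ ω, (‖gradient g (θ n ω)‖ ^ 2) ^ 2 ∂P ≤ ∫ ω, (4 * L) ^ 2 * g (θ n ω) ^ 2 ∂P := by
          refine integral_mono (h.integrable (Φ := fun p => (‖gradient g p.1‖ ^ 2) ^ 2)
            (by fun_prop) n) ((hgi n).const_mul _) fun ω => ?_
          simp only [← mul_pow]
          gcongr
          exact norm_gradient_sq_le hL hg hnonneg hsmooth _
      _ ≤ _ := by
          rw [integral_const_mul]
          gcongr
          exact hC n
  have hfreq := ae_frequently_le_of_integral_le (fun n ω => sq_nonneg (g (θ n ω)))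
    (fun n => ((h.stronglyMeasurable (Φ := fun p => g p.1 ^ 2) (by fun_prop) n).mono
      (ℱ.le n)).measurable) hgi hC
  have hgrad_sq := ae_summable_of_summable_integral (fun n ω => by positivity)
    (h.integrable (Φ := fun p => p.2 ^ 2 * ‖gradient g p.1‖ ^ 2) (by fun_prop)) hsum
  have hsq := ae_all_iff.2 fun j : ℕ => h.ae_summable_cutoff_sq hsum (1 / ((j : ℝ) + 1))
  have hvec := ae_all_iff.2 fun j : ℕ =>
    h.ae_tendsto_sum_cutoff_smul hsum (η := 1 / ((j : ℝ) + 1)) (by positivity)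
  have hval := ae_all_iff.2 fun N : ℕ =>
    h.ae_tendsto_sum_levelCutoff hL hg hnonneg hsmooth hsum (N := N) N.cast_nonneg
  filter_upwards [hsharp, hfreq, hgrad_sq, hsq, hvec, hval] with ω h1 ⟨N, h2⟩ h3 h4 h5 h6
  have hfr : ∃ N, ∃ᶠ n in atTop, g (θ n ω) ≤ N :=
    ⟨√N, h2.mono fun n hn => Real.le_sqrt_of_sq_le hn⟩
  have := (h.path ω).gradient_tendsto_zero hL hg hgrad hnonneg hsmooth hcoer hsard hδ₀ hδ₁ h1
    hfr h3 h4 h5 h6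
  simpa using this.norm.pow 2

end AdaGradNormProcess

/-- Theorem 5.4 (Mean-square convergence of AdaGrad-Norm):
`lim_{n→∞} E[‖∇g(θ_n)‖²] = 0`. -/
theorem adagrad_norm_mean_square_convergence
    {d : ℕ} {Ω : Type*} {m0 : MeasurableSpace Ω} (P : Measure Ω) [IsProbabilityMeasure P]
    (ℱ : Filtration ℕ m0)
    (g : EuclideanSpace ℝ (Fin d) → ℝ)
    (L σ₀ σ₁ α₀ S₀ δt δ₀ δ₁ : ℝ)
    (hL : 0 < L) (hσ₀ : 0 ≤ σ₀) (hσ₁ : 0 ≤ σ₁) (hα₀ : 0 < α₀) (hS₀ : 0 < S₀)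
    (hδ₀ : 0 < δ₀) (hδ₁ : 0 < δ₁)
    (hg_diff : ContDiff ℝ 1 g)
    (hg_nonneg : ∀ x, 0 ≤ g x)
    (hg_smooth : ∀ x y, ‖gradient g x - gradient g y‖ ≤ L * ‖x - y‖)
    (hδt : 0 < δt)
    (hflat : ∀ᶠ x in Bornology.cobounded (EuclideanSpace ℝ (Fin d)),
      δt < ‖gradient g x‖)
    (hg_coercive : Tendsto g (Bornology.cobounded (EuclideanSpace ℝ (Fin d))) atTop)
    (hg_sard : interior (closure {y : ℝ |
      ∃ x : EuclideanSpace ℝ (Fin d), gradient g x = 0 ∧ g x = y}) = ∅)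
    (θ₁ : EuclideanSpace ℝ (Fin d))
    (G θ : ℕ → Ω → EuclideanSpace ℝ (Fin d))
    (S : ℕ → Ω → ℝ)
    (hG_meas : ∀ n, 1 ≤ n → StronglyMeasurable[ℱ n] (G n))
    (hG_int : ∀ n, 1 ≤ n → Integrable (G n) P)
    (hG_sq_int : ∀ n, 1 ≤ n → Integrable (fun ω => ‖G n ω‖ ^ 2) P)
    (hθ_adapted : ∀ n, 1 ≤ n → StronglyMeasurable[ℱ (n - 1)] (θ n))
    (hθ_init : ∀ ω, θ 1 ω = θ₁)
    (hS_init : ∀ ω, S 0 ω = S₀)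
    (hS_rec : ∀ n, 1 ≤ n → ∀ ω, S n ω = S (n - 1) ω + ‖G n ω‖ ^ 2)
    (hθ_rec : ∀ n, 1 ≤ n → ∀ ω,
      θ (n + 1) ω = θ n ω - (α₀ / Real.sqrt (S n ω)) • G n ω)
    (hG_unbiased : ∀ n, 1 ≤ n →
      P[G n | ℱ (n - 1)] =ᵐ[P] fun ω => gradient g (θ n ω))
    (hG_var : ∀ n, 1 ≤ n → ∀ᵐ ω ∂P,
      (P[fun ω => ‖G n ω‖ ^ 2 | ℱ (n - 1)]) ω ≤ σ₀ * ‖gradient g (θ n ω)‖ ^ 2 + σ₁)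
    (hG_sharp : ∀ᵐ ω ∂P, ∀ n, 1 ≤ n →
      ‖gradient g (θ n ω)‖ ≤ δ₀ → ‖G n ω‖ ≤ δ₁) :
    Tendsto (fun n => ∫ ω, ‖gradient g (θ n ω)‖ ^ 2 ∂P) atTop (𝓝 0) := by
  have hlip : LipschitzWith L.toNNReal (gradient g) := LipschitzWith.of_dist_le_mul fun x y => by
    rw [dist_eq_norm, dist_eq_norm, Real.coe_toNNReal _ hL.le]
    exact hg_smooth x y
  have hproc : AdaGradNormProcess P ℱ g σ₀ σ₁ α₀ S₀ θ₁ (fun n => G (n + 1))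
      (fun n => θ (n + 1)) S :=
    { path := fun ω =>
        { α₀_pos := hα₀
          S_zero_pos := by rw [hS_init]; exact hS₀
          S_succ := fun n => hS_rec (n + 1) n.succ_pos ω
          θ_succ := fun n => hθ_rec (n + 1) n.succ_pos ω }
      θ_zero := hθ_init
      S_zero := hS_init
      continuous_gradient := hlip.continuous
      σ₀_nonneg := hσ₀
      σ₁_nonneg := hσ₁
      measurable_G := fun n => hG_meas (n + 1) n.succ_pos
      measurable_θ := fun n => hθ_adapted (n + 1) n.succ_pos
      integrable_G := fun n => hG_int (n + 1) n.succ_pos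
      integrable_sq := fun n => hG_sq_int (n + 1) n.succ_pos
      unbiased := fun n => hG_unbiased (n + 1) n.succ_pos
      variance := fun n => hG_var (n + 1) n.succ_pos }
  rw [← tendsto_add_atTop_iff_nat 1]
  exact hproc.tendsto_integral_gradient_sq hL (hg_diff.differentiable one_ne_zero) hg_nonneg
    hg_smooth hα₀ hδt hflat hg_coercive hg_sard hδ₀ hδ₁
    (hG_sharp.mono fun ω hω n => hω (n + 1) n.succ_pos)
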